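/- There exists a constant c such that every finite simple outerplanar graph G with n ≥ 2 vertices has a planar straight-line drawing of height at most c · log n. -/

import Mathlib

open Set

/-- A point in the plane. -/
abbrev Pt : Type := ℝ × ℝ

/-- A point has integer coordinates. -/
def IsIntPt (p : Pt) : Prop := (∃ a : ℤ, p.1 = (a : ℝ)) ∧ (∃ b : ℤ, p.2 = (b : ℝ))

/-- The (closed) segments of a polygonal chain, as pairs of consecutive corners. -/
def chainSegs (l : List Pt) : List (Pt × Pt) := l.zip l.tail

/-- The set of points covered by a polygonal chain. -/
def chainSet (l : List Pt) : Set Pt := ⋃ s ∈ chainSegs l, segment ℝ s.1 s.2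

/-- A polygonal chain is simple (non-self-intersecting): it has at least two
corners, all corners are distinct, and two of its segments meet only if they are
consecutive, and then only in their shared corner. -/
def IsSimpleChain (l : List Pt) : Prop :=
  2 ≤ l.length ∧ l.Nodup ∧
    ∀ i j : ℕ, i < j → ∀ (hi : i < (chainSegs l).length) (hj : j < (chainSegs l).length),
      segment ℝ ((chainSegs l).get ⟨i, hi⟩).1 ((chainSegs l).get ⟨i, hi⟩).2 ∩
        segment ℝ ((chainSegs l).get ⟨j, hj⟩).1 ((chainSegs l).get ⟨j, hj⟩).2 ⊆
        if j = i + 1 then {((chainSegs l).get ⟨j, hj⟩).1} else (∅ : Set Pt)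

/-- Every interior corner of the chain is a genuine bend (a direction change). -/
def GenuineBends (l : List Pt) : Prop :=
  ∀ i : ℕ, ∀ h : i + 2 < l.length,
    ¬ Collinear ℝ ({l.get ⟨i, by omega⟩, l.get ⟨i + 1, by omega⟩, l.get ⟨i + 2, h⟩} : Set Pt)

/-- The chain is a y-monotone path (horizontal segments allowed). -/
def IsMonoChain (l : List Pt) : Prop :=
  (l.map Prod.snd).Chain' (· ≤ ·) ∨ (l.map Prod.snd).Chain' (fun a b => b ≤ a)

/-- All segments of the chain are horizontal or vertical. -/
def IsOrthoChain (l : List Pt) : Prop :=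
  ∀ s ∈ chainSegs l, s.1.1 = s.2.1 ∨ s.1.2 = s.2.2

/-- A poly-line drawing of a graph `G`: every vertex is a point, and every edge
`uv` is the polygonal chain through the list `bends u v` of bend points
(listed in order from `u` to `v`). -/
structure PolylineDrawing {V : Type*} (G : SimpleGraph V) where
  pos : V → Pt
  bends : V → V → List Pt
  bends_symm : ∀ u v, bends v u = (bends u v).reverse

namespace PolylineDrawing

variable {V : Type*} {G : SimpleGraph V}

/-- The corner list of the curve of edge `uv`. -/
def chain (D : PolylineDrawing G) (u v : V) : List Pt :=
  D.pos u :: (D.bends u v ++ [D.pos v])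

/-- The set of points of the curve of edge `uv`. -/
def curve (D : PolylineDrawing G) (u v : V) : Set Pt := chainSet (D.chain u v)

/-- The defining elements of the drawing: vertex points and bends. -/
def points (D : PolylineDrawing G) : Set Pt :=
  Set.range D.pos ∪ ⋃ (u) (v) (_ : G.Adj u v), {p | p ∈ D.bends u v}

/-- The drawing is planar: vertex points are pairwise distinct, every edge curve
is a simple chain whose interior corners are genuine bends, an edge curve contains
no vertex point other than its endpoints, and two distinct edge curves intersect
only in points of common endpoints. -/
def IsPlanar (D : PolylineDrawing G) : Prop :=
  Function.Injective D.pos ∧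
  (∀ u v, G.Adj u v → IsSimpleChain (D.chain u v) ∧ GenuineBends (D.chain u v)) ∧
  (∀ u v w, G.Adj u v → w ≠ u → w ≠ v → D.pos w ∉ D.curve u v) ∧
  (∀ u v x y, G.Adj u v → G.Adj x y → s(u, v) ≠ s(x, y) →
    D.curve u v ∩ D.curve x y ⊆ D.pos '' (({u, v} : Set V) ∩ ({x, y} : Set V)))

/-- All defining elements have integer coordinates. -/
def IntCoords (D : PolylineDrawing G) : Prop := ∀ p ∈ D.points, IsIntPt p

/-- A straight-line drawing: no edge has bends. -/
def IsStraightLine (D : PolylineDrawing G) : Prop := ∀ u v : V, D.bends u v = []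

/-- Every edge curve is a y-monotone path. -/
def IsYMonotone (D : PolylineDrawing G) : Prop :=
  ∀ u v, G.Adj u v → IsMonoChain (D.chain u v)

/-- The drawing fits (after translation) in the rows `1, …, h`. -/
def InHeight (D : PolylineDrawing G) (h : ℕ) : Prop :=
  ∃ y0 : ℤ, ∀ p ∈ D.points, (y0 : ℝ) ≤ p.2 ∧ p.2 ≤ (y0 : ℝ) + (h : ℝ) - 1

/-- The drawing fits (after translation) in the columns `1, …, w`. -/
def InWidth (D : PolylineDrawing G) (w : ℕ) : Prop :=
  ∃ x0 : ℤ, ∀ p ∈ D.points, (x0 : ℝ) ≤ p.1 ∧ p.1 ≤ (x0 : ℝ) + (w : ℝ) - 1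

end PolylineDrawing

/-- An axis-parallel box (possibly degenerated to a segment or a point). -/
structure Box where
  x1 : ℝ
  x2 : ℝ
  y1 : ℝ
  y2 : ℝ
  hx : x1 ≤ x2
  hy : y1 ≤ y2

/-- The set of points of a box. -/
def Box.pts (b : Box) : Set Pt := Set.Icc b.x1 b.x2 ×ˢ Set.Icc b.y1 b.y2

/-- An orthogonal drawing of a graph `G`: every vertex is an axis-aligned box, and
every edge `uv` is an axis-parallel polygonal chain `chain u v` (its first corner is
the attachment point on the box of `u`, its last corner the attachment point on the
box of `v`). -/
structure OrthDrawing {V : Type*} (G : SimpleGraph V) where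
  box : V → Box
  chain : V → V → List Pt
  chain_symm : ∀ u v, chain v u = (chain u v).reverse

namespace OrthDrawing

variable {V : Type*} {G : SimpleGraph V}

/-- The set of points of the curve of edge `uv`. -/
def curve (D : OrthDrawing G) (u v : V) : Set Pt := chainSet (D.chain u v)

/-- The defining elements of the drawing: corners of vertex boxes, and corners
(attachment points and bends) of edge chains. -/
def points (D : OrthDrawing G) : Set Pt :=
  (⋃ v, ({((D.box v).x1, (D.box v).y1), ((D.box v).x1, (D.box v).y2),
          ((D.box v).x2, (D.box v).y1), ((D.box v).x2, (D.box v).y2)} : Set Pt)) ∪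
    ⋃ (u) (v) (_ : G.Adj u v), {p | p ∈ D.chain u v}

/-- All points covered by the drawing (boxes and edge curves). -/
def region (D : OrthDrawing G) : Set Pt :=
  (⋃ v, (D.box v).pts) ∪ ⋃ (u) (v) (_ : G.Adj u v), D.curve u v

/-- The drawing is planar: vertex boxes are pairwise disjoint; every edge curve is a
simple axis-parallel chain, with genuine bends, joining the boxes of its endpoints;
an edge curve meets a vertex box only in its attachment points; and two distinct
edge curves intersect only in common endpoints. -/
def IsPlanar (D : OrthDrawing G) : Prop :=
  (∀ u v : V, u ≠ v → Disjoint (D.box u).pts (D.box v).pts) ∧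
  (∀ u v, G.Adj u v → IsSimpleChain (D.chain u v) ∧ IsOrthoChain (D.chain u v) ∧
      GenuineBends (D.chain u v)) ∧
  (∀ u v, G.Adj u v → ∃ p q l, D.chain u v = p :: (l ++ [q]) ∧
      p ∈ (D.box u).pts ∧ q ∈ (D.box v).pts) ∧
  (∀ u v w, G.Adj u v → D.curve u v ∩ (D.box w).pts ⊆
      {p | (w = u ∧ (D.chain u v).head? = some p) ∨
           (w = v ∧ (D.chain u v).getLast? = some p)}) ∧
  (∀ u v x y, G.Adj u v → G.Adj x y → s(u, v) ≠ s(x, y) →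
      D.curve u v ∩ D.curve x y ⊆
        {p | ((D.chain u v).head? = some p ∨ (D.chain u v).getLast? = some p) ∧
             ((D.chain x y).head? = some p ∨ (D.chain x y).getLast? = some p)})

/-- A flat drawing: every vertex box is degenerated to a horizontal segment. -/
def IsFlat (D : OrthDrawing G) : Prop := ∀ v, (D.box v).y1 = (D.box v).y2

/-- A visibility representation: an orthogonal drawing without bends, i.e. every
edge is a single horizontal or vertical segment. -/
def IsVR (D : OrthDrawing G) : Prop := ∀ u v, G.Adj u v → (D.chain u v).length = 2

/-- Every edge curve is a y-monotone path. -/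
def IsYMonotone (D : OrthDrawing G) : Prop := ∀ u v, G.Adj u v → IsMonoChain (D.chain u v)

/-- All defining elements have integer coordinates. -/
def IntCoords (D : OrthDrawing G) : Prop := ∀ p ∈ D.points, IsIntPt p

/-- The drawing fits (after translation) in the rows `1, …, h`. -/
def InHeight (D : OrthDrawing G) (h : ℕ) : Prop :=
  ∃ y0 : ℤ, ∀ p ∈ D.points, (y0 : ℝ) ≤ p.2 ∧ p.2 ≤ (y0 : ℝ) + (h : ℝ) - 1

/-- The drawing fits (after translation) in the columns `1, …, w`. -/
def InWidth (D : OrthDrawing G) (w : ℕ) : Prop :=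
  ∃ x0 : ℤ, ∀ p ∈ D.points, (x0 : ℝ) ≤ p.1 ∧ p.1 ≤ (x0 : ℝ) + (w : ℝ) - 1

end OrthDrawing

/-- A graph is outerplanar iff its vertices can be placed (injectively) on the unit
circle so that edges, drawn as straight chords, intersect only in common endpoints
(a one-page book embedding). -/
def IsOuterplanar {V : Type*} (G : SimpleGraph V) : Prop :=
  ∃ pos : V → Pt, Function.Injective pos ∧
    (∀ v, (pos v).1 ^ 2 + (pos v).2 ^ 2 = 1) ∧
    ∀ u v x y, G.Adj u v → G.Adj x y → s(u, v) ≠ s(x, y) →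
      segment ℝ (pos u) (pos v) ∩ segment ℝ (pos x) (pos y) ⊆
        pos '' (({u, v} : Set V) ∩ ({x, y} : Set V))

/-- `G` has a planar straight-line drawing (with integer coordinates) of height at
most `h`. -/
def HasSLDrawingOfHeight {V : Type*} (G : SimpleGraph V) (h : ℕ) : Prop :=
  ∃ D : PolylineDrawing G, D.IsStraightLine ∧ D.IsPlanar ∧ D.IntCoords ∧ D.InHeight h

section Comb

variable {V : Type} {G : SimpleGraph V}

/-- The near-horizontal ray leaving row `yi` towards row `yj` is blocked by an edge between the
rows `ya` and `yb`. -/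
def Bad (yi yj ya yb : ℤ) : Prop :=
  (yi ≤ yj ∧ ((ya ≤ yi ∧ yi < yb) ∨ (yb ≤ yi ∧ yi < ya))) ∨
  (yj ≤ yi ∧ ((ya < yi ∧ yi ≤ yb) ∨ (yb < yi ∧ yi ≤ ya)))

/-- `τ` is the left-to-right order and `y` the row of each vertex of `S`; this is the combinatorial
condition for planarity when the x-coordinates grow very fast along `τ`. -/
structure Ok (G : SimpleGraph V) (S : Set V) (τ : V → ℕ) (y : V → ℤ) : Prop where
  inj : ∀ u ∈ S, ∀ v ∈ S, τ u = τ v → u = v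
  row : ∀ i ∈ S, ∀ j ∈ S, ∀ k ∈ S, G.Adj i j → τ i < τ k → τ k < τ j → y k = y i → y k ≠ y j
  cross : ∀ i ∈ S, ∀ j ∈ S, ∀ a ∈ S, ∀ b ∈ S, G.Adj i j → G.Adj a b → τ i < τ b → τ b < τ j →
    τ a < τ b → a ≠ i → ¬ Bad (y i) (y j) (y a) (y b)

theorem Ok.congr {S : Set V} {τ τ' : V → ℕ} {y y' : V → ℤ} (h : Ok G S τ y)
    (hτ : ∀ u ∈ S, ∀ v ∈ S, (τ' u < τ' v ↔ τ u < τ v)) (hy : ∀ u ∈ S, y' u = y u) :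
    Ok G S τ' y' := by
  refine ⟨?_, ?_, ?_⟩
  · intro u hu v hv e
    apply h.inj u hu v hv
    have h1 := hτ u hu v hv
    have h2 := hτ v hv u hu
    omega
  · intro i hi j hj k hk e h1 h2
    rw [hy i hi, hy j hj, hy k hk]
    exact h.row i hi j hj k hk e ((hτ _ hi _ hk).1 h1) ((hτ _ hk _ hj).1 h2)
  · intro i hi j hj a ha b hb e f h1 h2 h3 h4
    rw [hy i hi, hy j hj, hy a ha, hy b hb]
    exact h.cross i hi j hj a ha b hb e f ((hτ _ hi _ hb).1 h1) ((hτ _ hb _ hj).1 h2)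
      ((hτ _ ha _ hb).1 h3) h4

theorem Ok.shift {S : Set V} {τ : V → ℕ} {y : V → ℤ} (h : Ok G S τ y) (c : ℤ) :
    Ok G S τ (fun v => y v + c) := by
  refine ⟨h.inj, ?_, ?_⟩
  · intro i hi j hj k hk e h1 h2 h3
    have := h.row i hi j hj k hk e h1 h2
    intro h4
    exact this (by omega) (by omega)
  · intro i hi j hj a ha b hb e f h1 h2 h3 h4
    have := h.cross i hi j hj a ha b hb e f h1 h2 h3 h4
    unfold Bad at *
    omega

theorem Ok.flip {S : Set V} {τ : V → ℕ} {y : V → ℤ} (h : Ok G S τ y) (c : ℤ) :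
    Ok G S τ (fun v => c - y v) := by
  refine ⟨h.inj, ?_, ?_⟩
  · intro i hi j hj k hk e h1 h2 h3
    have := h.row i hi j hj k hk e h1 h2
    intro h4
    exact this (by omega) (by omega)
  · intro i hi j hj a ha b hb e f h1 h2 h3 h4
    have := h.cross i hi j hj a ha b hb e f h1 h2 h3 h4
    unfold Bad at *
    omega

/-- Exchange the order of the first two vertices. -/
theorem Ok.reorder {S : Set V} {τ : V → ℕ} {y : V → ℤ} {s t : V} (h : Ok G S τ y)
    (hst : s ≠ t) (hy : y s ≠ y t)
    (hs : ∀ v ∈ S, v ≠ s → v ≠ t → τ s < τ v ∧ τ t < τ v) :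
    ∃ τ' : V → ℕ, Ok G S τ' y ∧ τ' s < τ' t ∧
      (∀ v ∈ S, v ≠ s → v ≠ t → τ' s < τ' v ∧ τ' t < τ' v) := by
  classical
  set τ' : V → ℕ := fun v => if v = s then 0 else if v = t then 1 else τ v + 2 with hτ'
  have e1 : τ' s = 0 := by simp [hτ']
  have e2 : τ' t = 1 := by simp [hτ', hst.symm]
  have e3 : ∀ v, v ≠ s → v ≠ t → τ' v = τ v + 2 := by
    intro v h1 h2; simp [hτ', h1, h2]
  have key : ∀ u ∈ S, ∀ v ∈ S, v ≠ s → v ≠ t → τ' u < τ' v → τ u < τ v := by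
    intro u hu v hv h1 h2 h3
    by_cases hus : u = s
    · subst hus; exact (hs v hv h1 h2).1
    by_cases hut : u = t
    · subst hut; exact (hs v hv h1 h2).2
    rw [e3 u hus hut, e3 v h1 h2] at h3
    omega
  have third : ∀ i a b : V, i ≠ a → τ' i < τ' b → τ' a < τ' b → b ≠ s ∧ b ≠ t := by
    intro i a b hia h1 h2
    constructor
    · rintro rfl; omega
    · rintro rfl
      have : ∀ v, τ' v < τ' b → v = s := by
        intro v hv
        by_contra hne
        by_cases hvb : v = b
        · subst hvb; omega
        · rw [e3 v hne hvb] at hv; omega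
      exact hia ((this i h1).trans (this a h2).symm)
  refine ⟨τ', ⟨?_, ?_, ?_⟩, by omega, ?_⟩
  · intro u hu v hv e
    by_cases hus : u = s <;> by_cases hut : u = t <;> by_cases hvs : v = s <;>
      by_cases hvt : v = t <;> try (subst_vars; first | rfl | (exfalso; simp_all; done) | skip)
    rw [e3 u hus hut, e3 v hvs hvt] at e
    exact h.inj u hu v hv (by omega)
  · intro i hi j hj k hk e h1 h2
    have hj' := third i k j (by rintro rfl; omega) (by omega) h2
    by_cases hk' : k = s ∨ k = t
    · have hkt : k = t := by
        rcases hk' with rfl | h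
        · omega
        · exact h
      have his : i = s := by
        by_contra hne
        by_cases hit : i = t
        · subst hit hkt; omega
        · rw [e3 i hne hit, hkt] at h1; omega
      subst hkt his
      exact fun h5 => absurd h5.symm hy
    · push Not at hk'
      exact h.row i hi j hj k hk e (key _ hi _ hk hk'.1 hk'.2 h1) (key _ hk _ hj hj'.1 hj'.2 h2)
  · intro i hi j hj a ha b hb e f h1 h2 h3 h4
    have hb' := third i a b (Ne.symm h4) h1 h3
    have hj' := third i a j (Ne.symm h4) (by omega) (by omega)
    exact h.cross i hi j hj a ha b hb e f (key _ hi _ hb hb'.1 hb'.2 h1)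
      (key _ hb _ hj hj'.1 hj'.2 h2) (key _ ha _ hb hb'.1 hb'.2 h3) h4
  · intro v hv h1 h2
    rw [e3 v h1 h2]; omega

/-- Move one of the first two vertices, lying in the lowest row, to a new row below. -/
theorem Ok.lower {S : Set V} {τ : V → ℕ} {y y' : V → ℤ} {s t : V} (h : Ok G S τ y)
    (hs : ∀ v ∈ S, v ≠ s → v ≠ t → τ s < τ v ∧ τ t < τ v)
    (hmin : ∀ v ∈ S, y s ≤ y v) (h1 : y' s = y s - 1) (h2 : ∀ v ∈ S, v ≠ s → y' v = y v) :
    Ok G S τ y' := by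
  refine ⟨h.inj, ?_, ?_⟩
  · intro i hi j hj k hk e l1 l2 l3 l4
    have hki : k ≠ i := by rintro rfl; omega
    have hkj : k ≠ j := by rintro rfl; omega
    by_cases hks : k = s
    · subst hks
      have := h2 i hi (Ne.symm hki)
      have := hmin i hi
      omega
    · have h3 := h2 k hk hks
      have h4 := hmin k hk
      have his : i ≠ s := by rintro rfl; omega
      have hjs : j ≠ s := by rintro rfl; omega
      have := h2 i hi his
      have := h2 j hj hjs
      exact h.row i hi j hj k hk e l1 l2 (by omega) (by omega)
  · intro i hi j hj a ha b hb e f l1 l2 l3 l4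
    have hbs : b ≠ s := by
      rintro rfl
      have : ∀ v ∈ S, τ v < τ b → v = t := by
        intro v hv hlt
        by_contra hne
        have := hs v hv (by rintro rfl; omega) hne
        omega
      exact l4 ((this a ha l3).trans (this i hi l1).symm)
    have hjs : j ≠ s := by
      rintro rfl
      have : ∀ v ∈ S, τ v < τ j → v = t := by
        intro v hv hlt
        by_contra hne
        have := hs v hv (by rintro rfl; omega) hne
        omega
      have h5 := this b hb l2
      have h6 := this i hi (by omega)
      subst h5 h6
      omega
    have hc := h.cross i hi j hj a ha b hb e f l1 l2 l3 l4
    have hr := h.row i hi j hj b hb e l1 l2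
    have eb := h2 b hb hbs
    have ej := h2 j hj hjs
    have mb := hmin b hb
    have mj := hmin j hj
    have mi := hmin i hi
    have ma := hmin a ha
    by_cases his : i = s
    · subst his
      have ea := h2 a ha l4
      unfold Bad at *
      omega
    · have ei := h2 i hi his
      by_cases has : a = s
      · subst has
        unfold Bad at *
        omega
      · have ea := h2 a ha has
        rw [ea, eb, ei, ej]; exact hc

theorem Ok.raise {S : Set V} {τ : V → ℕ} {y y' : V → ℤ} {s t : V} (h : Ok G S τ y)
    (hs : ∀ v ∈ S, v ≠ s → v ≠ t → τ s < τ v ∧ τ t < τ v)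
    (hmax : ∀ v ∈ S, y v ≤ y s) (h1 : y' s = y s + 1) (h2 : ∀ v ∈ S, v ≠ s → y' v = y v) :
    Ok G S τ y' := by
  have h3 : Ok G S τ (fun v => 0 - y' v) :=
    (h.flip 0).lower (y' := fun v => 0 - y' v) hs
      (by intro v hv; have := hmax v hv; show 0 - y s ≤ 0 - y v; omega)
      (by show 0 - y' s = 0 - y s - 1; omega)
      (by intro v hv hne; have := h2 v hv hne; show 0 - y' v = 0 - y v; omega)
  exact (h3.flip 0).congr (fun _ _ _ _ => Iff.rfl) (fun u _ => by show y' u = 0 - (0 - y' u); omega)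

/-- Concatenation of two orders sharing the vertex `x`. -/
theorem merge_order [Finite V] {A B : Set V} {x : V} (hAB : A ∩ B = {x}) (τ₁ τ₂ : V → ℕ)
    (hB : ∀ v ∈ B, v ≠ x → τ₂ x < τ₂ v) :
    ∃ τ : V → ℕ, (∀ u ∈ A, ∀ v ∈ A, (τ u < τ v ↔ τ₁ u < τ₁ v)) ∧
      (∀ u ∈ B, ∀ v ∈ B, (τ u < τ v ↔ τ₂ u < τ₂ v)) ∧
      (∀ u ∈ A, ∀ v ∈ B, v ≠ x → τ u < τ v) := by
  classical
  obtain ⟨N, hN⟩ : ∃ N, ∀ v, τ₁ v < N := by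
    obtain ⟨N, hN⟩ := (Set.finite_range τ₁).bddAbove
    exact ⟨N + 1, fun v => Nat.lt_succ_of_le (hN ⟨v, rfl⟩)⟩
  have hx : x ∈ A ∩ B := by rw [hAB]; rfl
  have hBA : ∀ v ∈ B, v ≠ x → v ∉ A := by
    intro v hv hne hA
    have : v ∈ A ∩ B := ⟨hA, hv⟩
    rw [hAB] at this
    exact hne this
  set τ : V → ℕ := fun v => if v ∈ A then τ₁ v else τ₂ v + N with hτ
  have eA : ∀ v ∈ A, τ v = τ₁ v := fun v hv => by simp [hτ, hv]
  have eB : ∀ v ∈ B, v ≠ x → τ v = τ₂ v + N := fun v hv hne => by simp [hτ, hBA v hv hne]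
  refine ⟨τ, ?_, ?_, ?_⟩
  · intro u hu v hv; rw [eA u hu, eA v hv]
  · intro u hu v hv
    have h1 := hN x
    by_cases hux : u = x <;> by_cases hvx : v = x
    · subst hux hvx; simp
    · subst hux; rw [eA u hx.1, eB v hv hvx]; have := hB v hv hvx; omega
    · subst hvx; rw [eA v hx.1, eB u hu hux]; have := hB u hu hux; omega
    · rw [eB u hu hux, eB v hv hvx]; omega
  · intro u hu v hv hne
    rw [eA u hu, eB v hv hne]; have := hN u; omega

theorem merge_rows {A B : Set V} {x : V} (hAB : A ∩ B = {x}) (y₁ y₂ : V → ℤ) (h : y₁ x = y₂ x) :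
    ∃ y : V → ℤ, (∀ u ∈ A, y u = y₁ u) ∧ (∀ u ∈ B, y u = y₂ u) := by
  classical
  refine ⟨fun v => if v ∈ A then y₁ v else y₂ v, fun u hu => by simp [hu], fun u hu => ?_⟩
  by_cases hA : u ∈ A
  · have : u ∈ A ∩ B := ⟨hA, hu⟩
    rw [hAB] at this
    have : u = x := this
    subst this
    simp [hA, h]
  · simp [hA]

/-- Drawings of `S` with root edge `s t`: `s` is leftmost, in row `σ`, `t` is rightmost, in row `0`,
and everything else is in rows `1, …, T`. -/
def DD (G : SimpleGraph V) (S : Set V) (s t : V) (T σ : ℤ) : Prop :=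
  ∃ (τ : V → ℕ) (y : V → ℤ), Ok G S τ y ∧ (∀ v ∈ S, v ≠ s → τ s < τ v) ∧
    (∀ v ∈ S, v ≠ t → τ v < τ t) ∧ y s = σ ∧ y t = 0 ∧
    (∀ v ∈ S, v ≠ s → v ≠ t → 1 ≤ y v ∧ y v ≤ T)

/-- Drawings of `S` with root edge `s t`: `s` and `t` are the leftmost two vertices, `s` is in the
bottom row `0` and `t` in the top row `T`. -/
def FF (G : SimpleGraph V) (S : Set V) (s t : V) (T : ℤ) : Prop :=
  ∃ (τ : V → ℕ) (y : V → ℤ), Ok G S τ y ∧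
    (∀ v ∈ S, v ≠ s → v ≠ t → τ s < τ v ∧ τ t < τ v) ∧ y s = 0 ∧ y t = T ∧
    (∀ v ∈ S, 0 ≤ y v ∧ y v ≤ T)

theorem FF.symm {S : Set V} {s t : V} {T : ℤ} (h : FF G S s t T) : FF G S t s T := by
  obtain ⟨τ, y, h1, h2, h3, h4, h5⟩ := h
  refine ⟨τ, fun v => T - y v, h1.flip T, fun v hv a b => (h2 v hv b a).symm, ?_, ?_, ?_⟩
  · show T - y t = 0; omega
  · show T - y s = T; omega
  · intro v hv; have := h5 v hv; show 0 ≤ T - y v ∧ T - y v ≤ T; omega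

/-- The main gluing step for `DD`. -/
theorem glueD [Finite V] {A B : Set V} {s x t : V} {T σ : ℤ} (hAB : A ∩ B = {x})
    (hsA : s ∈ A) (htB : t ∈ B) (hsx : s ≠ x) (hxt : x ≠ t)
    (hE : ∀ u ∈ A, ∀ v ∈ B, G.Adj u v → u ∈ B ∨ v ∈ A ∨ (u = s ∧ v = t))
    {τ₁ τ₂ : V → ℕ} {y₁ y₂ : V → ℤ} (h₁ : Ok G A τ₁ y₁) (h₂ : Ok G B τ₂ y₂)
    (hfs : ∀ v ∈ A, v ≠ s → τ₁ s < τ₁ v)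
    (hvis : (∀ v ∈ A, v ≠ x → τ₁ v < τ₁ x) ∨ (∀ v ∈ A, v ≠ x → y₁ v < y₁ x) ∨
      (∀ v ∈ A, v ≠ x → y₁ x < y₁ v))
    (hfx : ∀ v ∈ B, v ≠ x → τ₂ x < τ₂ v) (hlt : ∀ v ∈ B, v ≠ t → τ₂ v < τ₂ t)
    (hyx : y₁ x = y₂ x) (hys : y₁ s = σ) (hyt : y₂ t = 0)
    (hA : ∀ v ∈ A, v ≠ s → 1 ≤ y₁ v ∧ y₁ v ≤ T)
    (hB : ∀ v ∈ B, v ≠ t → v ≠ x → 1 ≤ y₂ v ∧ y₂ v ≤ T)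
    (hσ : σ = 0 ∨ σ = 1 ∨ σ = T + 1) : DD G (A ∪ B) s t T σ := by
  obtain ⟨τ, tA, tB, tAB⟩ := merge_order hAB τ₁ τ₂ hfx
  obtain ⟨y, yA, yB⟩ := merge_rows hAB y₁ y₂ hyx
  have hx : x ∈ A ∩ B := by rw [hAB]; rfl
  have hBA : ∀ v ∈ B, v ∈ A → v = x := by
    intro v hv hA
    have : v ∈ A ∩ B := ⟨hA, hv⟩
    rw [hAB] at this
    exact this
  replace h₁ : Ok G A τ y := h₁.congr tA yA
  replace h₂ : Ok G B τ y := h₂.congr tB yB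
  replace hfs : ∀ v ∈ A, v ≠ s → τ s < τ v := fun v hv hne => (tA _ hsA _ hv).2 (hfs v hv hne)
  replace hfx : ∀ v ∈ B, v ≠ x → τ x < τ v := fun v hv hne => (tB _ hx.2 _ hv).2 (hfx v hv hne)
  replace hlt : ∀ v ∈ B, v ≠ t → τ v < τ t := fun v hv hne => (tB _ hv _ htB).2 (hlt v hv hne)
  replace hvis : (∀ v ∈ A, v ≠ x → τ v < τ x) ∨ (∀ v ∈ A, v ≠ x → y v < y x) ∨
      (∀ v ∈ A, v ≠ x → y x < y v) := by
    rcases hvis with h | h | h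
    · exact Or.inl fun v hv hne => (tA _ hv _ hx.1).2 (h v hv hne)
    · refine Or.inr (Or.inl fun v hv hne => ?_)
      rw [yA v hv, yA x hx.1]; exact h v hv hne
    · refine Or.inr (Or.inr fun v hv hne => ?_)
      rw [yA v hv, yA x hx.1]; exact h v hv hne
  replace hA : ∀ v ∈ A, v ≠ s → 1 ≤ y v ∧ y v ≤ T := fun v hv => by rw [yA v hv]; exact hA v hv
  replace hB : ∀ v ∈ B, v ≠ t → 1 ≤ y v ∧ y v ≤ T := fun v hv hne => by
    by_cases hvx : v = x
    · subst hvx; exact hA v hx.1 (Ne.symm hsx)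
    · rw [yB v hv]; exact hB v hv hne hvx
  have hys' : y s = σ := by rw [yA s hsA, hys]
  have hyt' : y t = 0 := by rw [yB t htB, hyt]
  have hlast : ∀ v ∈ A ∪ B, v ≠ t → τ v < τ t := by
    rintro v (hv | hv) hne
    · exact tAB v hv t htB (Ne.symm hxt)
    · exact hlt v hv hne
  have hfirst : ∀ v ∈ A ∪ B, v ≠ s → τ s < τ v := by
    rintro v (hv | hv) hne
    · exact hfs v hv hne
    · by_cases hvx : v = x
      · subst hvx; exact hfs v hx.1 hne
      · exact tAB s hsA v hv hvx
  have hmid : ∀ v ∈ A ∪ B, v ≠ s → v ≠ t → 1 ≤ y v ∧ y v ≤ T := by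
    rintro v (hv | hv) h1 h2
    · exact hA v hv h1
    · exact hB v hv h2
  have hst : s ≠ t := by
    rintro rfl
    exact hsx (hBA s htB hsA)
  have edge : ∀ u ∈ A ∪ B, ∀ v ∈ A ∪ B, G.Adj u v →
      (u ∈ A ∧ v ∈ A) ∨ (u ∈ B ∧ v ∈ B) ∨ (u = s ∧ v = t) ∨ (u = t ∧ v = s) := by
    rintro u (hu | hu) v (hv | hv) e
    · exact Or.inl ⟨hu, hv⟩
    · rcases hE u hu v hv e with h | h | h <;> tauto
    · rcases hE v hv u hu e.symm with h | h | h <;> tauto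
    · exact Or.inr (Or.inl ⟨hu, hv⟩)
  have inA : ∀ u ∈ A ∪ B, ∀ v ∈ A, τ u < τ v → u ∈ A := by
    rintro u (hu | hu) v hv hlt
    · exact hu
    · by_cases hux : u = x
      · subst hux; exact hx.1
      · have := tAB v hv u hu hux; omega
  have inB : ∀ u ∈ A ∪ B, ∀ v ∈ B, τ v < τ u → u ∈ B ∨ (v = x ∧ u ∈ A ∧ u ≠ x) := by
    rintro u (hu | hu) v hv hlt
    · by_cases hvx : v = x
      · subst hvx; right; refine ⟨rfl, hu, ?_⟩; rintro rfl; omega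
      · have := tAB u hu v hv hvx; omega
    · exact Or.inl hu
  refine ⟨τ, y, ⟨?_, ?_, ?_⟩, hfirst, hlast, hys', hyt', hmid⟩
  · have key : ∀ u ∈ A, ∀ v ∈ B, τ u = τ v → u = v := by
      intro u hu v hv e
      by_cases hvx : v = x
      · subst hvx; exact h₁.inj u hu v hx.1 e
      · have := tAB u hu v hv hvx; omega
    rintro u (hu | hu) v (hv | hv) e
    · exact h₁.inj u hu v hv e
    · exact key u hu v hv e
    · exact (key v hv u hu e.symm).symm
    · exact h₂.inj u hu v hv e
  · intro i hi j hj k hk e l1 l2 l3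
    rcases edge i hi j hj e with ⟨hi', hj'⟩ | ⟨hi', hj'⟩ | ⟨rfl, rfl⟩ | ⟨rfl, rfl⟩
    · exact h₁.row i hi' j hj' k (inA k hk j hj' l2) e l1 l2 l3
    · rcases inB k hk i hi' l1 with hk' | ⟨rfl, hk', hne⟩
      · exact h₂.row i hi' j hj' k hk' e l1 l2 l3
      · rcases hvis with h | h | h <;> have := h k hk' hne <;> omega
    · have := hmid k hk (by rintro rfl; omega) (by rintro rfl; omega)
      omega
    · have := hlast j hj hst; omega
  · intro i hi j hj a ha b hb e f l1 l2 l3 l4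
    have hbt : b ≠ t := by
      rintro rfl
      have := hlast j hj (by rintro rfl; omega)
      omega
    rcases edge i hi j hj e with ⟨hi', hj'⟩ | ⟨hi', hj'⟩ | ⟨rfl, rfl⟩ | ⟨rfl, rfl⟩
    · have hb' := inA b hb j hj' l2
      have ha' := inA a ha b hb' l3
      exact h₁.cross i hi' j hj' a ha' b hb' e f l1 l2 l3 l4
    · rcases inB b hb i hi' l1 with hb' | ⟨rfl, hb', hne⟩
      · by_cases ha' : a ∈ B
        · exact h₂.cross i hi' j hj' a ha' b hb' e f l1 l2 l3 l4
        · rcases edge a ha b hb f with ⟨ha2, hb2⟩ | ⟨ha2, hb2⟩ | ⟨rfl, rfl⟩ | ⟨rfl, rfl⟩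
          · have hbx := hBA b hb' hb2
            subst hbx
            have := hfx i hi' (by rintro rfl; omega)
            omega
          · exact absurd ha2 ha'
          · exact absurd rfl hbt
          · exact absurd htB ha'
      · have ha' := inA a ha b hb' l3
        unfold Bad
        rcases hvis with h | h | h <;> have q1 := h b hb' hne <;> have q2 := h a ha' l4 <;> omega
    · have := hmid b hb (by rintro rfl; omega) hbt
      have := hmid a ha l4 (by rintro rfl; omega)
      unfold Bad
      omega
    · have := hlast j hj hst; omega

/-- The gluing step for `FF`. -/
theorem glueF [Finite V] {A B : Set V} {s x t : V} {T : ℤ} (hAB : A ∩ B = {x})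
    (hsA : s ∈ A) (htB : t ∈ B) (hsx : s ≠ x) (hxt : x ≠ t) (hT : 1 ≤ T)
    (hE : ∀ u ∈ A, ∀ v ∈ B, G.Adj u v → u ∈ B ∨ v ∈ A ∨ (u = s ∧ v = t))
    (hA : DD G A s x (T - 1) 0) (hB : FF G B x t T) : FF G (A ∪ B) s t T := by
  classical
  have hx : x ∈ A ∩ B := by rw [hAB]; rfl
  have hBA : ∀ v ∈ B, v ∈ A → v = x := by
    intro v hv hA
    have : v ∈ A ∩ B := ⟨hA, hv⟩
    rw [hAB] at this
    exact this
  have htA : t ∉ A := fun h => hxt (hBA t htB h).symm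
  obtain ⟨τ₁, y₁, h₁, a1, a2, a3, a4, a5⟩ := hA
  obtain ⟨τ₀, y₂, h₀, b1, b2, b3, b4⟩ := hB
  obtain ⟨τ₂, h₂, c1, c2⟩ := h₀.reorder (s := t) (t := x) (Ne.symm hxt) (by omega)
    (fun v hv p q => (b1 v hv q p).symm)
  obtain ⟨N, hN⟩ : ∃ N, ∀ v, τ₁ v < N := by
    obtain ⟨N, hN⟩ := (Set.finite_range τ₁).bddAbove
    exact ⟨N + 1, fun v => Nat.lt_succ_of_le (hN ⟨v, rfl⟩)⟩
  obtain ⟨y, yA, yB⟩ := merge_rows hAB y₁ y₂ (by omega)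
  set τ : V → ℕ := fun v => if v = t then 0 else if v ∈ A then τ₁ v + 1 else τ₂ v + N + 1 with hτ
  have et : τ t = 0 := by simp [hτ]
  have eA : ∀ v ∈ A, τ v = τ₁ v + 1 := fun v hv => by
    have : v ≠ t := by rintro rfl; exact htA hv
    simp [hτ, hv, this]
  have eB : ∀ v ∈ B, v ≠ x → v ≠ t → τ v = τ₂ v + N + 1 := fun v hv h1 h2 => by
    have : v ∉ A := fun h => h1 (hBA v hv h)
    simp [hτ, this, h2]
  have tA : ∀ u ∈ A, ∀ v ∈ A, (τ u < τ v ↔ τ₁ u < τ₁ v) := by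
    intro u hu v hv; rw [eA u hu, eA v hv]; omega
  have tB : ∀ u ∈ B, ∀ v ∈ B, (τ u < τ v ↔ τ₂ u < τ₂ v) := by
    intro u hu v hv
    have hNx := hN x
    have ex := eA x hx.1
    by_cases hux : u = x
    · by_cases hvx : v = x
      · subst hux hvx; simp
      · by_cases hvt : v = t
        · subst hux hvt; omega
        · have := eB v hv hvx hvt
          have := c2 v hv hvt hvx
          subst hux; omega
    · by_cases hut : u = t
      · by_cases hvx : v = x
        · subst hut hvx; omega
        · by_cases hvt : v = t
          · subst hut hvt; simp
          · have := eB v hv hvx hvt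
            have := c2 v hv hvt hvx
            subst hut; omega
      · have e1 := eB u hu hux hut
        have e2 := c2 u hu hut hux
        by_cases hvx : v = x
        · subst hvx; omega
        · by_cases hvt : v = t
          · subst hvt; omega
          · have := eB v hv hvx hvt
            omega
  have tAB : ∀ u ∈ A, ∀ v ∈ B, v ≠ x → v ≠ t → τ u < τ v := by
    intro u hu v hv p q
    rw [eA u hu, eB v hv p q]; have := hN u; omega
  have tt : ∀ u ∈ A ∪ B, u ≠ t → τ t < τ u := by
    rintro u (hu | hu) p
    · rw [et, eA u hu]; omega
    · by_cases hux : u = x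
      · subst hux; rw [et, eA u hx.1]; omega
      · rw [et, eB u hu hux p]; omega
  replace h₁ : Ok G A τ y := h₁.congr tA yA
  replace h₂ : Ok G B τ y := h₂.congr tB yB
  replace a1 : ∀ v ∈ A, v ≠ s → τ s < τ v := fun v hv hne => (tA _ hsA _ hv).2 (a1 v hv hne)
  replace a2 : ∀ v ∈ A, v ≠ x → τ v < τ x := fun v hv hne => (tA _ hv _ hx.1).2 (a2 v hv hne)
  have ys : y s = 0 := by rw [yA s hsA, a3]
  have yx : y x = 0 := by rw [yA x hx.1, a4]
  have yt : y t = T := by rw [yB t htB, b3]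
  have yAr : ∀ v ∈ A, 0 ≤ y v ∧ y v ≤ T - 1 := by
    intro v hv
    by_cases h1 : v = s
    · subst h1; omega
    · by_cases h2 : v = x
      · subst h2; omega
      · have := a5 v hv h1 h2
        rw [yA v hv]; omega
  have hst : s ≠ t := by rintro rfl; exact htA hsA
  have edge : ∀ u ∈ A ∪ B, ∀ v ∈ A ∪ B, G.Adj u v →
      (u ∈ A ∧ v ∈ A) ∨ (u ∈ B ∧ v ∈ B) ∨ (u = s ∧ v = t) ∨ (u = t ∧ v = s) := by
    rintro u (hu | hu) v (hv | hv) e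
    · exact Or.inl ⟨hu, hv⟩
    · rcases hE u hu v hv e with h | h | h <;> tauto
    · rcases hE v hv u hu e.symm with h | h | h <;> tauto
    · exact Or.inr (Or.inl ⟨hu, hv⟩)
  have inA : ∀ u ∈ A ∪ B, ∀ v ∈ A, τ u < τ v → u ∈ A ∨ u = t := by
    rintro u (hu | hu) v hv hlt
    · exact Or.inl hu
    · by_cases hux : u = x
      · subst hux; exact Or.inl hx.1
      · by_cases hut : u = t
        · exact Or.inr hut
        · have := tAB v hv u hu hux hut; omega
  have inB : ∀ u ∈ A ∪ B, ∀ v ∈ B, τ v < τ u → u ∈ B ∨ (v = t ∧ u ∈ A) := by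
    rintro u (hu | hu) v hv hlt
    · by_cases hvx : v = x
      · subst hvx
        left
        have := a2 u hu (by rintro rfl; omega)
        omega
      · by_cases hvt : v = t
        · exact Or.inr ⟨hvt, hu⟩
        · have := tAB u hu v hv hvx hvt; omega
    · exact Or.inl hu
  have notfirst : ∀ a b, a ∈ A ∪ B → τ a < τ b → b ≠ t := by
    rintro a b ha h rfl
    omega
  refine ⟨τ, y, ⟨?_, ?_, ?_⟩, ?_, ys, yt, ?_⟩
  · have key : ∀ u ∈ A, ∀ v ∈ B, τ u = τ v → u = v := by
      intro u hu v hv e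
      by_cases hvx : v = x
      · subst hvx; exact h₁.inj u hu v hx.1 e
      · by_cases hvt : v = t
        · subst hvt; rw [et, eA u hu] at e; omega
        · have := tAB u hu v hv hvx hvt; omega
    rintro u (hu | hu) v (hv | hv) e
    · exact h₁.inj u hu v hv e
    · exact key u hu v hv e
    · exact (key v hv u hu e.symm).symm
    · exact h₂.inj u hu v hv e
  · intro i hi j hj k hk e l1 l2 l3
    rcases edge i hi j hj e with ⟨hi', hj'⟩ | ⟨hi', hj'⟩ | ⟨rfl, rfl⟩ | ⟨rfl, rfl⟩
    · rcases inA k hk j hj' l2 with hk' | rfl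
      · exact h₁.row i hi' j hj' k hk' e l1 l2 l3
      · exact absurd rfl (notfirst i k hi l1)
    · rcases inB k hk i hi' l1 with hk' | ⟨rfl, hk'⟩
      · exact h₂.row i hi' j hj' k hk' e l1 l2 l3
      · have := yAr k hk'; omega
    · omega
    · omega
  · intro i hi j hj a ha b hb e f l1 l2 l3 l4
    have hbt := notfirst i b hi l1
    rcases edge i hi j hj e with ⟨hi', hj'⟩ | ⟨hi', hj'⟩ | ⟨rfl, rfl⟩ | ⟨rfl, rfl⟩
    · have hb' := (inA b hb j hj' l2).resolve_right hbt
      rcases inA a ha b hb' l3 with ha' | rfl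
      · exact h₁.cross i hi' j hj' a ha' b hb' e f l1 l2 l3 l4
      · exfalso
        rcases edge a ha b hb f with ⟨ha2, hb2⟩ | ⟨ha2, hb2⟩ | ⟨rfl, rfl⟩ | ⟨_, rfl⟩
        · exact htA ha2
        · have hbx := hBA b hb2 hb'
          subst hbx
          have := a2 j hj' (by rintro rfl; omega)
          omega
        · exact hst rfl
        · have := a1 i hi' (by rintro rfl; omega)
          omega
    · rcases inB b hb i hi' l1 with hb' | ⟨rfl, hb'⟩
      · by_cases ha' : a ∈ B
        · exact h₂.cross i hi' j hj' a ha' b hb' e f l1 l2 l3 l4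
        · rcases edge a ha b hb f with ⟨ha2, hb2⟩ | ⟨ha2, hb2⟩ | ⟨rfl, rfl⟩ | ⟨rfl, rfl⟩
          · have hbx := hBA b hb' hb2
            subst hbx
            rcases inA i hi b hb2 l1 with hi2 | rfl
            · have hix := hBA i hi' hi2
              subst hix; omega
            · have := yAr a ha2
              unfold Bad; omega
          · exact absurd ha2 ha'
          · exact absurd rfl hbt
          · exact absurd htB ha'
      · rcases inA a ha b hb' l3 with ha' | rfl
        · have := yAr a ha'
          have := yAr b hb'
          unfold Bad; omega
        · exact absurd rfl l4
    · omega
    · by_cases hbs : b = j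
      · subst hbs; omega
      · exfalso
        rcases hb with hb' | hb'
        · have := a1 b hb' hbs; omega
        · by_cases hbx : b = x
          · subst hbx; have := a1 b hx.1 hbs; omega
          · have := tAB j hsA b hb' hbx hbt; omega
  · intro v hv h1 h2
    refine ⟨?_, tt v hv h2⟩
    rcases hv with hv | hv
    · exact a1 v hv h1
    · by_cases hvx : v = x
      · subst hvx; exact a1 v hx.1 h1
      · exact tAB s hsA v hv hvx h2
  · rintro v (hv | hv)
    · have := yAr v hv; omega
    · have := b4 v hv; rw [yB v hv]; exact this

theorem FF.piece {S : Set V} {s t : V} {T : ℤ} (h : FF G S s t T) (hst : s ≠ t)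
    (hT : 1 ≤ T) (c : ℤ) (hc : c = 0 ∨ c = 1) :
    ∃ (τ : V → ℕ) (y : V → ℤ), Ok G S τ y ∧ (∀ v ∈ S, v ≠ s → τ s < τ v) ∧
      y s = - c ∧ y t = T + 1 ∧ (∀ v ∈ S, v ≠ s → v ≠ t → 0 ≤ y v ∧ y v ≤ T) := by
  classical
  obtain ⟨τ₀, y, h0, h1, h2, h3, h4⟩ := h
  obtain ⟨τ, h5, h6, h7⟩ := h0.reorder hst (by omega) h1
  have h8 : Ok G S τ (fun v => if v = t then T + 1 else y v) := by
    refine h5.raise (s := t) (t := s) (fun v hv a b => (h7 v hv b a).symm) ?_ ?_ ?_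
    · intro v hv; rw [h3]; exact (h4 v hv).2
    · simp [h3]
    · intro v _ hne; simp [hne]
  have hfirst : ∀ v ∈ S, v ≠ s → τ s < τ v := by
    intro v hv hne
    by_cases hvt : v = t
    · subst hvt; exact h6
    · exact (h7 v hv hne hvt).1
  have hmid : ∀ v ∈ S, v ≠ s → v ≠ t →
      0 ≤ (if v = t then T + 1 else y v) ∧ (if v = t then T + 1 else y v) ≤ T := by
    intro v hv _ b; simp only [b, if_false]; exact h4 v hv
  rcases hc with rfl | rfl
  · exact ⟨τ, _, h8, hfirst, by simp [hst, h2], by simp, hmid⟩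
  · refine ⟨τ, fun v => if v = s then -1 else if v = t then T + 1 else y v,
      h8.lower (s := s) (t := t) h7 ?_ ?_ ?_, hfirst, by simp, by simp [hst.symm], ?_⟩
    · intro v hv
      simp only [hst, if_false, h2]
      split_ifs
      · omega
      · exact (h4 v hv).1
    · simp [hst, h2]
    · intro v _ hne; simp [hne]
    · intro v hv a b
      simp only [a, b, if_false]
      exact h4 v hv

/-- `S` with root edge `s t` is an outerplanar piece of `G` of size `m`. -/
inductive Out (G : SimpleGraph V) : Set V → V → V → ℕ → Prop
  | base (s t : V) (h : s ≠ t) : Out G {s, t} s t 1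
  | node {A B : Set V} {s x t : V} {m n : ℕ} (hA : Out G A s x m) (hB : Out G B x t n)
      (hAB : A ∩ B = {x})
      (hE : ∀ u ∈ A, ∀ v ∈ B, G.Adj u v → u ∈ B ∨ v ∈ A ∨ (u = s ∧ v = t)) :
      Out G (A ∪ B) s t (m + n)

theorem Out.facts {S : Set V} {s t : V} {m : ℕ} (h : Out G S s t m) :
    s ∈ S ∧ t ∈ S ∧ s ≠ t ∧ 1 ≤ m := by
  induction h with
  | base s t h => simp [h]
  | @node A B s x t m n hA hB hAB hE ihA ihB =>
    refine ⟨Or.inl ihA.1, Or.inr ihB.2.1, ?_, by omega⟩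
    rintro rfl
    have : s ∈ A ∩ B := ⟨ihA.1, ihB.2.1⟩
    rw [hAB] at this
    exact ihA.2.2.1 this

theorem Out.symm {S : Set V} {s t : V} {m : ℕ} (h : Out G S s t m) : Out G S t s m := by
  induction h with
  | base s t h => rw [Set.pair_comm]; exact Out.base t s h.symm
  | @node A B s x t m n hA hB hAB hE ihA ihB =>
    rw [Set.union_comm, Nat.add_comm]
    refine Out.node ihB ihA (by rw [Set.inter_comm]; exact hAB) ?_
    intro u hu v hv e
    rcases hE v hv u hu e.symm with h | h | h <;> tauto

theorem ok_pair {s t : V} (τ : V → ℕ) (y : V → ℤ) (h : τ s < τ t) :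
    Ok G {s, t} τ y := by
  refine ⟨?_, ?_, ?_⟩
  · rintro u (rfl | rfl) v (rfl | rfl) e <;> first | rfl | omega
  · rintro i (rfl | rfl) j (rfl | rfl) k (rfl | rfl) e <;> omega
  · rintro i (rfl | rfl) j (rfl | rfl) a _ b (rfl | rfl) e <;> omega

theorem DD.base {s t : V} (h : s ≠ t) (T σ : ℤ) : DD G {s, t} s t T σ := by
  classical
  refine ⟨fun v => if v = s then 0 else 1, fun v => if v = s then σ else 0,
    ok_pair _ _ (by simp [h.symm]), ?_, ?_, by simp, by simp [h.symm], ?_⟩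
  · rintro v (rfl | rfl) hne <;> simp_all
  · rintro v (rfl | rfl) hne
    · simp [h.symm]
    · exact absurd rfl hne
  · rintro v (rfl | rfl) h1 h2 <;> simp_all

theorem FF.base {s t : V} (h : s ≠ t) (T : ℤ) (hT : 0 ≤ T) : FF G {s, t} s t T := by
  classical
  refine ⟨fun v => if v = s then 0 else 1, fun v => if v = s then 0 else T,
    ok_pair _ _ (by simp [h.symm]), ?_, by simp, by simp [h.symm], ?_⟩
  · rintro v (rfl | rfl) h1 h2 <;> simp_all
  · rintro v (rfl | rfl)
    · simp [hT]
    · simp [h.symm, hT]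

/-- All pieces of size at most `M` have all types of `DD` drawings with `T ≥ L`. -/
def AllD (G : SimpleGraph V) (M : ℕ) (L : ℤ) : Prop :=
  ∀ (S : Set V) (s t : V) (m : ℕ), Out G S s t m → m ≤ M → ∀ T : ℤ, L ≤ T →
    DD G S s t T 0 ∧ DD G S s t T 1 ∧ DD G S s t T (T + 1)

theorem stepF [Finite V] {M : ℕ} {L : ℤ} (hL : 0 ≤ L) (hD : AllD G M L)
    {S : Set V} {s t : V} {m : ℕ} (h : Out G S s t m) :
    m ≤ 2 * M → ∀ T : ℤ, L + 1 ≤ T → FF G S s t T := by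
  induction h with
  | base s t h => intro _ T hT; exact FF.base h T (by omega)
  | @node A B s x t m n hA hB hAB hE ihA ihB =>
    intro hm T hT
    obtain ⟨fA1, fA2, fA3, fA4⟩ := hA.facts
    obtain ⟨fB1, fB2, fB3, fB4⟩ := hB.facts
    by_cases hlight : m ≤ M
    · exact glueF hAB fA1 fB2 fA3 fB3 (by omega) hE (hD A s x m hA hlight (T - 1) (by omega)).1
        (ihB (by omega) T hT)
    · have h1 : FF G (B ∪ A) t s T := by
        refine glueF (x := x) (by rw [Set.inter_comm]; exact hAB) fB2 fA1 fB3.symm fA3.symm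
          (by omega) ?_ (hD B t x n hB.symm (by omega) (T - 1) (by omega)).1
          (ihA (by omega) T hT).symm
        intro u hu v hv e
        rcases hE v hv u hu e.symm with h | h | h <;> tauto
      rw [Set.union_comm]
      exact h1.symm

/-- The part of the induction step in which the `s`-side is light. -/
theorem stepD_left [Finite V] {A B : Set V} {s x t : V} {T σ : ℤ} (hAB : A ∩ B = {x})
    (hsA : s ∈ A) (htB : t ∈ B) (hsx : s ≠ x) (hxt : x ≠ t)
    (hE : ∀ u ∈ A, ∀ v ∈ B, G.Adj u v → u ∈ B ∨ v ∈ A ∨ (u = s ∧ v = t)) (hT : 1 ≤ T)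
    (hA0 : DD G A s x (T - 1) 0) (hA1 : DD G A s x (T - 1) T)
    (hB : DD G B x t T 1) (hσ : σ = 0 ∨ σ = 1 ∨ σ = T + 1) : DD G (A ∪ B) s t T σ := by
  classical
  obtain ⟨τ₂, y₂, k1, k2, k3, k4, k5, k6⟩ := hB
  have hB' : ∀ v ∈ B, v ≠ t → v ≠ x → 1 ≤ y₂ v ∧ y₂ v ≤ T := fun v hv a b => k6 v hv b a
  rcases hσ with rfl | rfl | rfl
  · obtain ⟨τ₁, y₁, h1, h2, h3, h4, h5, h6⟩ := hA0
    have hok : Ok G A τ₁ (fun v => if v = s then 0 else y₁ v + 1) := by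
      refine (h1.shift 1).lower (s := s) (t := s) (fun v hv a _ => ⟨h2 v hv a, h2 v hv a⟩) ?_ ?_ ?_
      · intro v hv
        show y₁ s + 1 ≤ y₁ v + 1
        by_cases hvs : v = s
        · subst hvs; omega
        · by_cases hvx : v = x
          · subst hvx; omega
          · have := h6 v hv hvs hvx; omega
      · simp [h4]
      · intro v _ hne; simp [hne]
    refine glueD hAB hsA htB hsx hxt hE hok k1 h2 (Or.inl h3) k2 k3 ?_ ?_ k5 ?_ hB' (by simp)
    · simp [hsx.symm, h5, k4]
    · simp
    · intro v hv hvs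
      simp only [hvs, if_false]
      by_cases hvx : v = x
      · subst hvx; omega
      · have := h6 v hv hvs hvx; omega
  · obtain ⟨τ₁, y₁, h1, h2, h3, h4, h5, h6⟩ := hA0
    refine glueD hAB hsA htB hsx hxt hE (h1.shift 1) k1 h2 (Or.inl h3) k2 k3 ?_ ?_ k5 ?_ hB'
      (by simp)
    · simp [h5, k4]
    · simp [h4]
    · intro v hv hvs
      by_cases hvx : v = x
      · subst hvx; simp only [h5]; omega
      · have := h6 v hv hvs hvx; omega
  · obtain ⟨τ₁, y₁, h1, h2, h3, h4, h5, h6⟩ := hA1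
    refine glueD hAB hsA htB hsx hxt hE (h1.shift 1) k1 h2 (Or.inl h3) k2 k3 ?_ ?_ k5 ?_ hB'
      (by simp)
    · simp [h5, k4]
    · simp [h4]
    · intro v hv hvs
      by_cases hvx : v = x
      · subst hvx; simp only [h5]; omega
      · have := h6 v hv hvs hvx; omega

/-- The part of the induction step in which the `t`-side is light. -/
theorem stepD_right [Finite V] {A B : Set V} {s x t : V} {T σ : ℤ} (hAB : A ∩ B = {x})
    (hsA : s ∈ A) (htB : t ∈ B) (hsx : s ≠ x) (hxt : x ≠ t)
    (hE : ∀ u ∈ A, ∀ v ∈ B, G.Adj u v → u ∈ B ∨ v ∈ A ∨ (u = s ∧ v = t)) (hT : 3 ≤ T)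
    (hA : FF G A s x (T - 2))
    (hB1 : DD G B x t T 1) (hB2 : DD G B x t (T - 1) T)
    (hσ : σ = 0 ∨ σ = 1 ∨ σ = T + 1) : DD G (A ∪ B) s t T σ := by
  have low : ∀ c : ℤ, (c = 0 ∨ c = 1) → DD G (A ∪ B) s t T (1 - c) := by
    intro c hc
    obtain ⟨τ₁, y₁, h1, h2, h3, h4, h5⟩ := hA.piece hsx (by omega) c hc
    obtain ⟨τ₂, y₂, k1, k2, k3, k4, k5, k6⟩ := hB2
    refine glueD hAB hsA htB hsx hxt hE (h1.shift 1) k1 h2 (Or.inr (Or.inl ?_)) k2 k3 ?_ ?_ k5 ?_ ?_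
      (by omega)
    · intro v hv hvx
      show y₁ v + 1 < y₁ x + 1
      by_cases hvs : v = s
      · subst hvs; omega
      · have := h5 v hv hvs hvx; omega
    · show y₁ x + 1 = _
      omega
    · show y₁ s + 1 = _
      omega
    · intro v hv hvs
      show 1 ≤ y₁ v + 1 ∧ y₁ v + 1 ≤ T
      by_cases hvx : v = x
      · subst hvx; omega
      · have := h5 v hv hvs hvx; omega
    · intro v hv a b
      have := k6 v hv b a; omega
  rcases hσ with rfl | rfl | rfl
  · exact low 1 (by simp)
  · exact low 0 (by simp)
  · obtain ⟨τ₁, y₁, h1, h2, h3, h4, h5⟩ := hA.piece hsx (by omega) 1 (by simp)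
    obtain ⟨τ₂, y₂, k1, k2, k3, k4, k5, k6⟩ := hB1
    refine glueD hAB hsA htB hsx hxt hE (h1.flip T) k1 h2 (Or.inr (Or.inr ?_)) k2 k3 ?_ ?_ k5 ?_ ?_
      (by omega)
    · intro v hv hvx
      show T - y₁ x < T - y₁ v
      by_cases hvs : v = s
      · subst hvs; omega
      · have := h5 v hv hvs hvx; omega
    · show T - y₁ x = _
      omega
    · show T - y₁ s = _
      omega
    · intro v hv hvs
      show 1 ≤ T - y₁ v ∧ T - y₁ v ≤ T
      by_cases hvx : v = x
      · subst hvx; omega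
      · have := h5 v hv hvs hvx; omega
    · intro v hv a b
      exact k6 v hv b a

theorem stepD [Finite V] {M : ℕ} {L : ℤ} (hL : 0 ≤ L) (hD : AllD G M L) :
    AllD G (2 * M) (L + 3) := by
  intro S s t m h
  induction h with
  | base s t h => intro _ T _; exact ⟨DD.base h _ _, DD.base h _ _, DD.base h _ _⟩
  | @node A B s x t m n hA hB hAB hE ihA ihB =>
    intro hm T hT
    obtain ⟨fA1, fA2, fA3, fA4⟩ := hA.facts
    obtain ⟨fB1, fB2, fB3, fB4⟩ := hB.facts
    have main : ∀ σ : ℤ, (σ = 0 ∨ σ = 1 ∨ σ = T + 1) → DD G (A ∪ B) s t T σ := by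
      intro σ hσ
      by_cases hlight : m ≤ M
      · have q := hD A s x m hA hlight (T - 1) (by omega)
        have q2 := q.2.2
        rw [sub_add_cancel] at q2
        exact stepD_left hAB fA1 fB2 fA3 fB3 hE (by omega) q.1 q2
          (ihB (by omega) T hT).2.1 hσ
      · have q := hD B x t n hB (by omega) (T - 1) (by omega)
        have q2 := q.2.2
        rw [sub_add_cancel] at q2
        exact stepD_right hAB fA1 fB2 fA3 fB3 hE (by omega)
          (stepF hL hD hA (by omega) (T - 2) (by omega))
          (hD B x t n hB (by omega) T (by omega)).2.1 q2 hσ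
    exact ⟨main 0 (by simp), main 1 (by simp), main (T + 1) (by simp)⟩

theorem allD [Finite V] (G : SimpleGraph V) (k : ℕ) : AllD G (2 ^ k) (3 * k) := by
  induction k with
  | zero =>
    intro S s t m h
    cases h with
    | base s t h => intro _ T _; exact ⟨DD.base h _ _, DD.base h _ _, DD.base h _ _⟩
    | node hA hB _ _ =>
      intro hm
      have := hA.facts.2.2.2
      have := hB.facts.2.2.2
      simp at hm
      omega
  | succ k ih =>
    have := stepD (by omega) ih
    rw [pow_succ, mul_comm]
    push_cast
    rw [mul_add, mul_one]
    exact this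

end Comb

section Geo

variable {V : Type} {G : SimpleGraph V}

/-- Coordinates of the points of a segment running from left to right. -/
theorem seg_coords {p q z : Pt} (h : z ∈ segment ℝ p q) :
    ∃ θ : ℝ, 0 ≤ θ ∧ θ ≤ 1 ∧ z.1 = p.1 + θ * (q.1 - p.1) ∧ z.2 = p.2 + θ * (q.2 - p.2) := by
  rw [segment_eq_image'] at h
  obtain ⟨θ, ⟨h0, h1⟩, rfl⟩ := h
  exact ⟨θ, h0, h1, by simp, by simp⟩

theorem seg_of_coords {p q z : Pt} {θ : ℝ} (h0 : 0 ≤ θ) (h1 : θ ≤ 1)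
    (hx : z.1 = p.1 + θ * (q.1 - p.1)) (hy : z.2 = p.2 + θ * (q.2 - p.2)) :
    z ∈ segment ℝ p q := by
  rw [segment_eq_image']
  refine ⟨θ, ⟨h0, h1⟩, ?_⟩
  ext <;> simp [hx, hy]

/-- Data for the geometric realisation. -/
structure Geo (G : SimpleGraph V) (τ : V → ℕ) (y : V → ℤ) (H : ℤ) (X : ℕ → ℤ) : Prop where
  ok : Ok G univ τ y
  yr : ∀ v, 0 ≤ y v ∧ y v ≤ H
  mono : StrictMono X
  grow : ∀ i b j, i < b → b < j → H * (X b - X i) < X j - X i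

variable {τ : V → ℕ} {y : V → ℤ} {H : ℤ} {X : ℕ → ℤ}

/-- The point of a vertex. -/
def gp (τ : V → ℕ) (y : V → ℤ) (X : ℕ → ℤ) (v : V) : Pt := ((X (τ v) : ℝ), (y v : ℝ))

/-- An edge stays close to the row of its left endpoint. -/
theorem Geo.near (g : Geo G τ y H X) {i j : V} (hij : τ i < τ j) {b : ℕ} (hb : τ i ≤ b)
    (hbj : b < τ j)
    {z : Pt} (hz : z ∈ segment ℝ (gp τ y X i) (gp τ y X j)) (hzb : z.1 ≤ X b) :
    (X (τ i) : ℝ) ≤ z.1 ∧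
    (y i < y j → (y i : ℝ) ≤ z.2 ∧ z.2 < y i + 1 ∧ (z.2 = y i → z.1 = X (τ i))) ∧
    (y j < y i → z.2 ≤ (y i : ℝ) ∧ (y i : ℝ) - 1 < z.2 ∧ (z.2 = y i → z.1 = X (τ i))) ∧
    (y j = y i → z.2 = y i) := by
  obtain ⟨θ, h0, h1, hx, hy⟩ := seg_coords hz
  simp only [gp] at hx hy
  have hm : (X (τ i) : ℝ) < X (τ j) := by exact_mod_cast g.mono hij
  have hi := g.yr i
  have hj := g.yr j
  have hiR : (0 : ℝ) ≤ y i ∧ (y i : ℝ) ≤ H := by exact_mod_cast hi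
  have hjR : (0 : ℝ) ≤ y j ∧ (y j : ℝ) ≤ H := by exact_mod_cast hj
  have hθ : θ * ((X (τ j) : ℝ) - X (τ i)) ≤ X b - X (τ i) := by linarith
  have hsmall : (H : ℝ) * θ < 1 := by
    rcases hb.lt_or_eq with hlt | heq
    · have hg : (H : ℝ) * (X b - X (τ i)) < X (τ j) - X (τ i) := by
        exact_mod_cast g.grow _ _ _ hlt hbj
      by_contra hcon
      push Not at hcon
      have hH : (0 : ℝ) ≤ H := by linarith
      nlinarith
    · subst heq
      have : θ ≤ 0 := by
        by_contra hcon
        push Not at hcon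
        nlinarith
      have : θ = 0 := le_antisymm this h0
      subst this; simp
  refine ⟨by nlinarith, ?_, ?_, ?_⟩
  · intro hlt
    have hlt' : (y i : ℝ) < y j := by exact_mod_cast hlt
    refine ⟨by nlinarith, by nlinarith, ?_⟩
    intro he
    have : θ * ((y j : ℝ) - y i) = 0 := by linarith
    rcases mul_eq_zero.1 this with h | h
    · rw [hx, h]; ring
    · linarith
  · intro hlt
    have hlt' : (y j : ℝ) < y i := by exact_mod_cast hlt
    refine ⟨by nlinarith, by nlinarith, ?_⟩
    intro he
    have : θ * ((y j : ℝ) - y i) = 0 := by linarith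
    rcases mul_eq_zero.1 this with h | h
    · rw [hx, h]; ring
    · linarith
  · intro he
    rw [hy, he]; ring

theorem Geo.inj (g : Geo G τ y H X) : Function.Injective (gp τ y X) := by
  intro u v h
  have h1 : ((X (τ u) : ℝ)) = X (τ v) := congrArg Prod.fst h
  have h2 : X (τ u) = X (τ v) := by exact_mod_cast h1
  exact g.ok.inj u trivial v trivial (g.mono.injective h2)

theorem seg_range {τ : V → ℕ} {y : V → ℤ} {X : ℕ → ℤ} (hX : StrictMono X) {a b : V}
    (hab : τ a ≤ τ b) {z : Pt}
    (hz : z ∈ segment ℝ (gp τ y X a) (gp τ y X b)) :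
    ((X (τ a) : ℝ) ≤ z.1 ∧ z.1 ≤ X (τ b)) ∧ (min (y a : ℝ) (y b) ≤ z.2 ∧ z.2 ≤ max (y a : ℝ) (y b)) ∧
    (y a ≠ y b → z.2 = y a → z.1 = X (τ a)) ∧ (y a ≠ y b → z.2 = y b → z.1 = X (τ b)) := by
  obtain ⟨θ, h0, h1, hx, hy⟩ := seg_coords hz
  simp only [gp] at hx hy
  have hm : (X (τ a) : ℝ) ≤ X (τ b) := by exact_mod_cast hX.monotone hab
  refine ⟨⟨by nlinarith, by nlinarith⟩, ?_, ?_, ?_⟩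
  · rcases le_total (y a : ℝ) (y b) with h | h
    · rw [min_eq_left h, max_eq_right h]; constructor <;> nlinarith
    · rw [min_eq_right h, max_eq_left h]; constructor <;> nlinarith
  · intro hne he
    have hne' : (y b : ℝ) - y a ≠ 0 := by
      intro h; apply hne; have : (y a : ℝ) = y b := by linarith
      exact_mod_cast this
    have : θ * ((y b : ℝ) - y a) = 0 := by linarith
    rcases mul_eq_zero.1 this with h | h
    · rw [hx, h]; ring
    · exact (hne' h).elim
  · intro hne he
    have hne' : (y b : ℝ) - y a ≠ 0 := by
      intro h; apply hne; have : (y a : ℝ) = y b := by linarith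
      exact_mod_cast this
    have : (1 - θ) * ((y b : ℝ) - y a) = 0 := by linarith
    rcases mul_eq_zero.1 this with h | h
    · have : θ = 1 := by linarith
      rw [hx, this]; ring
    · exact (hne' h).elim

/-- No vertex on an edge. -/
theorem Geo.vertex (g : Geo G τ y H X) {i j k : V} (hij : τ i < τ j) (e : G.Adj i j)
    (hki : k ≠ i) (hkj : k ≠ j) : gp τ y X k ∉ segment ℝ (gp τ y X i) (gp τ y X j) := by
  intro hz
  have hr := (seg_range g.mono hij.le hz).1
  simp only [gp, Int.cast_le] at hr
  have h1 : τ i ≤ τ k := g.mono.le_iff_le.1 hr.1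
  have h2 : τ k ≤ τ j := g.mono.le_iff_le.1 hr.2
  have h1' : τ i < τ k := lt_of_le_of_ne h1 fun h => hki (g.ok.inj i trivial k trivial h).symm
  have h2' : τ k < τ j := lt_of_le_of_ne h2 fun h => hkj (g.ok.inj k trivial j trivial h)
  obtain ⟨-, n1, n2, n3⟩ := g.near hij h1 h2' hz (le_refl _)
  simp only [gp] at n1 n2 n3
  have hxx : (X (τ k) : ℝ) ≠ X (τ i) := by
    intro h
    have h' : X (τ k) = X (τ i) := by exact_mod_cast h
    have := g.mono.injective h'; omega
  rcases lt_trichotomy (y i) (y j) with h | h | h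
  · obtain ⟨a, b, c⟩ := n1 h
    have a' : y i ≤ y k := by exact_mod_cast a
    have b' : y k < y i + 1 := by exact_mod_cast b
    have : y k = y i := by omega
    exact hxx (c (by rw [this]))
  · have h3 := n3 h.symm
    have h3' : y k = y i := by exact_mod_cast h3
    exact g.ok.row i trivial j trivial k trivial e h1' h2' h3' (by omega)
  · obtain ⟨a, b, c⟩ := n2 h
    have a' : y k ≤ y i := by exact_mod_cast a
    have b' : y i - 1 < y k := by exact_mod_cast b
    have : y k = y i := by omega
    exact hxx (c (by rw [this]))

/-- Two edges sharing their right endpoint. -/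
theorem Geo.apex (g : Geo G τ y H X) {i a j : V} (hia : τ i < τ a) (haj : τ a < τ j)
    (e : G.Adj i j) {z : Pt} (hz : z ∈ segment ℝ (gp τ y X i) (gp τ y X j))
    (hz' : z ∈ segment ℝ (gp τ y X a) (gp τ y X j)) : z = gp τ y X j := by
  by_contra hne
  have hv := g.vertex (hia.trans haj) e (k := a) (by rintro rfl; omega) (by rintro rfl; omega)
  apply hv
  rw [segment_symm] at hz hz' ⊢
  obtain ⟨θ, h0, h1, hx, hy⟩ := seg_coords hz
  obtain ⟨η, k0, k1, kx, ky⟩ := seg_coords hz'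
  have hm1 : (X (τ i) : ℝ) < X (τ a) := by exact_mod_cast g.mono hia
  have hm2 : (X (τ a) : ℝ) < X (τ j) := by exact_mod_cast g.mono haj
  have hη : 0 < η := by
    rcases k0.lt_or_eq with h | h
    · exact h
    · exfalso; apply hne
      ext
      · rw [kx, ← h]; ring
      · rw [ky, ← h]; ring
  simp only [gp] at hx hy kx ky
  have hle : θ ≤ η := by
    by_contra hcon
    push Not at hcon
    nlinarith
  refine seg_of_coords (θ := θ / η) (by positivity) ((div_le_one hη).2 hle) ?_ ?_
  · simp only [gp]; field_simp; linarith
  · simp only [gp]; field_simp; linarith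

/-- Two edges whose right endpoints differ. -/
theorem Geo.cross (g : Geo G τ y H X) {i j a b : V} (hij : τ i < τ j) (hab : τ a < τ b)
    (hbj : τ b < τ j) (e : G.Adj i j) (f : G.Adj a b) {z : Pt}
    (hz : z ∈ segment ℝ (gp τ y X i) (gp τ y X j))
    (hz' : z ∈ segment ℝ (gp τ y X a) (gp τ y X b)) :
    ∃ w, z = gp τ y X w ∧ (w = i ∨ w = j) ∧ (w = a ∨ w = b) := by
  obtain ⟨⟨r1, r2⟩, ⟨r3, r4⟩, r5, r6⟩ := seg_range g.mono hab.le hz'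
  have q := (seg_range g.mono hij.le hz).1
  have hib : τ i ≤ τ b := by
    have : (X (τ i) : ℝ) ≤ X (τ b) := q.1.trans r2
    exact g.mono.le_iff_le.1 (by exact_mod_cast this)
  obtain ⟨-, n1, n2, n3⟩ := g.near hij hib hbj hz r2
  -- a point of the edge `i j` above the x-coordinate of `i` is the point of `i`
  have atI : z.1 = X (τ i) → z = gp τ y X i := by
    intro h
    obtain ⟨θ, h0, h1, hx, hy⟩ := seg_coords hz
    have hm : (X (τ i) : ℝ) < X (τ j) := by exact_mod_cast g.mono hij
    simp only [gp] at hx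
    have : θ * ((X (τ j) : ℝ) - X (τ i)) = 0 := by linarith
    rcases mul_eq_zero.1 this with h | h
    · subst h; ext
      · rw [hx]; simp [gp]
      · rw [hy]; simp
    · linarith
  have hXne : ∀ u v : V, τ u ≠ τ v → (X (τ u) : ℝ) ≠ X (τ v) := by
    intro u v h h'
    have h' : X (τ u) = X (τ v) := by exact_mod_cast h'
    exact h (g.mono.injective h')
  rcases hib.lt_or_eq with hib | hib
  swap
  · have : i = b := g.ok.inj i trivial b trivial hib
    subst this
    exact ⟨i, atI (le_antisymm r2 q.1), Or.inl rfl, Or.inr rfl⟩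
  by_cases hai : a = i
  · subst hai
    by_cases hzx : z.1 = X (τ a)
    · exact ⟨a, atI hzx, Or.inl rfl, Or.inl rfl⟩
    exfalso
    obtain ⟨θ, h0, h1, hx, hy⟩ := seg_coords hz
    obtain ⟨η, k0, k1, kx, ky⟩ := seg_coords hz'
    simp only [gp] at hx hy kx ky
    have hm1 : (X (τ a) : ℝ) < X (τ b) := by exact_mod_cast g.mono hab
    have hm2 : (X (τ a) : ℝ) < X (τ j) := by exact_mod_cast g.mono hij
    have hθ : θ ≠ 0 := by rintro rfl; apply hzx; rw [hx]; ring
    have hη : η ≠ 0 := by rintro rfl; apply hzx; rw [kx]; ring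
    have hg : (H : ℝ) * (X (τ b) - X (τ a)) < X (τ j) - X (τ a) := by
      exact_mod_cast g.grow _ _ _ hab hbj
    have hr := g.ok.row a trivial j trivial b trivial e hab hbj
    have hprod : ((y b : ℝ) - y a) * (X (τ j) - X (τ a)) = (y j - y a) * (X (τ b) - X (τ a)) := by
      have e1 : θ * ((X (τ j) : ℝ) - X (τ a)) = η * (X (τ b) - X (τ a)) := by linarith
      have e2 : θ * ((y j : ℝ) - y a) = η * (y b - y a) := by linarith
      have : θ * η * (((y b : ℝ) - y a) * (X (τ j) - X (τ a))) =
          θ * η * ((y j - y a) * (X (τ b) - X (τ a))) := by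
        linear_combination (η * ((y b : ℝ) - y a)) * e1 - (η * ((X (τ b) : ℝ) - X (τ a))) * e2
      exact mul_left_cancel₀ (mul_ne_zero hθ hη) this
    have hj := g.yr j
    have ha := g.yr a
    have hja : (y j : ℝ) - y a ≤ H ∧ -(H : ℝ) ≤ (y j : ℝ) - y a := by
      constructor
      · have : y j - y a ≤ H := by omega
        exact_mod_cast this
      · have : -H ≤ y j - y a := by omega
        exact_mod_cast this
    rcases lt_trichotomy (y a) (y b) with h | h | h
    · have : (1 : ℝ) ≤ y b - y a := by
        have : 1 ≤ y b - y a := by omega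
        exact_mod_cast this
      nlinarith
    · have h' : (y a : ℝ) = y b := by exact_mod_cast h
      rw [h'] at hprod
      have : ((y j : ℝ) - y b) * (X (τ b) - X (τ a)) = 0 := by rw [← hprod]; ring
      rcases mul_eq_zero.1 this with h3 | h3
      · have h4 : (y b : ℝ) = y j := by linarith
        exact hr h.symm (by exact_mod_cast h4)
      · linarith
    · have : (y b : ℝ) - y a ≤ -1 := by
        have : y b - y a ≤ -1 := by omega
        exact_mod_cast this
      nlinarith
  exfalso
  have hnb := g.ok.cross i trivial j trivial a trivial b trivial e f hib hbj hab hai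
  have hzi : z.1 = X (τ i) → y a = y i → y b = y i → False := by
    intro h h1 h2
    have h3 : τ a ≤ τ i := by
      have : (X (τ a) : ℝ) ≤ X (τ i) := by linarith
      exact g.mono.le_iff_le.1 (by exact_mod_cast this)
    have h4 : τ a < τ i := lt_of_le_of_ne h3 fun h => hai (g.ok.inj a trivial i trivial h)
    exact g.ok.row a trivial b trivial i trivial f h4 hib h1.symm h2.symm
  have hza : z.1 = X (τ i) → z.1 ≠ X (τ a) := by
    intro h h'
    exact hXne i a (fun h => hai (g.ok.inj a trivial i trivial h.symm)) (by rw [← h, h'])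
  have hzb : z.1 = X (τ i) → z.1 ≠ X (τ b) := by
    intro h h'
    exact hXne i b (by omega) (by rw [← h, h'])
  have cmin : min (y a : ℝ) (y b) = ((min (y a) (y b) : ℤ) : ℝ) := by push_cast; rfl
  have cmax : max (y a : ℝ) (y b) = ((max (y a) (y b) : ℤ) : ℝ) := by push_cast; rfl
  rw [cmin] at r3
  rw [cmax] at r4
  have fin : z.2 = y i → z.1 = X (τ i) → (y i = y a ∨ y i = y b) → False := by
    intro h1 h2 h3
    by_cases hE : y a = y b
    · exact hzi h2 (by omega) (by omega)
    · rcases h3 with h3 | h3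
      · exact hza h2 (r5 hE (by rw [h1, h3]))
      · exact hzb h2 (r6 hE (by rw [h1, h3]))
  unfold Bad at hnb
  rcases lt_trichotomy (y i) (y j) with h | h | h
  · obtain ⟨c1, c2, c3⟩ := n1 h
    have d1 : ((min (y a) (y b) : ℤ) : ℝ) < (y i + 1 : ℤ) := by push_cast at r3 ⊢; linarith
    have d1' : min (y a) (y b) < y i + 1 := by exact_mod_cast d1
    have d2 : y i ≤ max (y a) (y b) := by exact_mod_cast c1.trans r4
    have d3 : max (y a) (y b) = y i := by omega
    have d4 : z.2 = y i := le_antisymm (by rw [d3] at r4; exact r4) c1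
    exact fin d4 (c3 d4) (by omega)
  · have c := n3 h.symm
    rw [c] at r3 r4
    have d1 : min (y a) (y b) ≤ y i := by exact_mod_cast r3
    have d2 : y i ≤ max (y a) (y b) := by exact_mod_cast r4
    exact g.ok.row i trivial j trivial b trivial e hib hbj (by omega) (by omega)
  · obtain ⟨c1, c2, c3⟩ := n2 h
    have d1 : ((y i - 1 : ℤ) : ℝ) < ((max (y a) (y b) : ℤ) : ℝ) := by
      push_cast at r4 ⊢; linarith
    have d1' : y i - 1 < max (y a) (y b) := by exact_mod_cast d1
    have d2 : min (y a) (y b) ≤ y i := by exact_mod_cast r3.trans c1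
    have d3 : min (y a) (y b) = y i := by omega
    have d4 : z.2 = y i := le_antisymm c1 (by rw [d3] at r3; exact r3)
    exact fin d4 (c3 d4) (by omega)

theorem Geo.planar (g : Geo G τ y H X) {u v p q : V} (e : G.Adj u v) (f : G.Adj p q)
    (hne : s(u, v) ≠ s(p, q)) :
    segment ℝ (gp τ y X u) (gp τ y X v) ∩ segment ℝ (gp τ y X p) (gp τ y X q) ⊆
      gp τ y X '' (({u, v} : Set V) ∩ ({p, q} : Set V)) := by
  -- reduce to edges oriented from left to right
  have main : ∀ u v p q : V, τ u < τ v → τ p < τ q → G.Adj u v → G.Adj p q → s(u, v) ≠ s(p, q) →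
      ∀ z, z ∈ segment ℝ (gp τ y X u) (gp τ y X v) → z ∈ segment ℝ (gp τ y X p) (gp τ y X q) →
      z ∈ gp τ y X '' (({u, v} : Set V) ∩ ({p, q} : Set V)) := by
    intro u v p q huv hpq e f hne z hz hz'
    rcases lt_trichotomy (τ q) (τ v) with h | h | h
    · obtain ⟨w, rfl, h1, h2⟩ := g.cross huv hpq h e f hz hz'
      exact ⟨w, ⟨h1, h2⟩, rfl⟩
    · have : q = v := g.ok.inj q trivial v trivial h
      subst this
      have hz2 : z = gp τ y X q := by
        rcases lt_trichotomy (τ u) (τ p) with h | h | h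
        · exact g.apex h hpq e hz hz'
        · exact absurd (by rw [g.ok.inj u trivial p trivial h]) hne
        · exact g.apex h huv f hz' hz
      exact ⟨q, ⟨Or.inr rfl, Or.inr rfl⟩, hz2.symm⟩
    · obtain ⟨w, rfl, h1, h2⟩ := g.cross hpq huv h f e hz' hz
      exact ⟨w, ⟨h2, h1⟩, rfl⟩
  have ne : ∀ u v : V, G.Adj u v → τ u ≠ τ v := fun u v e h =>
    e.ne (g.ok.inj u trivial v trivial h)
  rintro z ⟨hz, hz'⟩
  rcases (ne u v e).lt_or_gt with h1 | h1 <;> rcases (ne p q f).lt_or_gt with h2 | h2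
  · exact main u v p q h1 h2 e f hne z hz hz'
  · rw [segment_symm] at hz'
    rw [Sym2.eq_swap (a := p)] at hne
    rw [Set.pair_comm p q]
    exact main u v q p h1 h2 e f.symm hne z hz hz'
  · rw [segment_symm] at hz
    rw [Sym2.eq_swap (a := u)] at hne
    rw [Set.pair_comm u v]
    exact main v u p q h1 h2 e.symm f hne z hz hz'
  · rw [segment_symm] at hz hz'
    rw [Sym2.eq_swap (a := u), Sym2.eq_swap (a := p)] at hne
    rw [Set.pair_comm u v, Set.pair_comm p q]
    exact main v u q p h1 h2 e.symm f.symm hne z hz hz'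

theorem Geo.vertex' (g : Geo G τ y H X) {i j k : V} (e : G.Adj i j)
    (hki : k ≠ i) (hkj : k ≠ j) : gp τ y X k ∉ segment ℝ (gp τ y X i) (gp τ y X j) := by
  have ne : τ i ≠ τ j := fun h => e.ne (g.ok.inj i trivial j trivial h)
  rcases ne.lt_or_gt with h | h
  · exact g.vertex h e hki hkj
  · rw [segment_symm]; exact g.vertex h e.symm hkj hki

theorem chainSet_pair (p q : Pt) : chainSet [p, q] = segment ℝ p q := by
  simp [chainSet, chainSegs]

theorem Geo.drawing (g : Geo G τ y H X) (h : ℕ) (hh : H + 1 ≤ h) : HasSLDrawingOfHeight G h := by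
  refine ⟨⟨gp τ y X, fun _ _ => [], fun _ _ => rfl⟩, fun _ _ => rfl, ⟨g.inj, ?_, ?_, ?_⟩, ?_, 0, ?_⟩
  · intro u v e
    constructor
    · refine ⟨by simp [PolylineDrawing.chain], ?_, ?_⟩
      · simp only [PolylineDrawing.chain, List.nil_append, List.nodup_cons, List.mem_singleton,
          List.not_mem_nil, not_false_eq_true, List.nodup_nil, and_true]
        exact fun h => e.ne (g.inj h)
      · intro i j hij hi hj
        simp [PolylineDrawing.chain, chainSegs] at hi hj
        omega
    · intro i hi
      simp [PolylineDrawing.chain] at hi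
  · intro u v w e h1 h2
    show _ ∉ chainSet [_, _]
    rw [chainSet_pair]
    exact g.vertex' e h1 h2
  · intro u v p q e f hne
    show chainSet [_, _] ∩ chainSet [_, _] ⊆ _
    rw [chainSet_pair, chainSet_pair]
    exact g.planar e f hne
  · intro p hp
    rcases hp with ⟨v, rfl⟩ | hp
    · exact ⟨⟨X (τ v), rfl⟩, ⟨y v, rfl⟩⟩
    · simp at hp
  · intro p hp
    rcases hp with ⟨v, rfl⟩ | hp
    · have := g.yr v
      simp only [gp]
      constructor
      · exact_mod_cast this.1
      · have h3 : y v ≤ h - 1 := by omega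
        have h4 : (y v : ℝ) ≤ ((h - 1 : ℤ) : ℝ) := by exact_mod_cast h3
        push_cast at h4 ⊢
        linarith
    · simp at hp

theorem drawing_of_ok {τ : V → ℕ} {y : V → ℤ} {H : ℤ} (hH : 1 ≤ H) (hok : Ok G univ τ y)
    (hy : ∀ v, 0 ≤ y v ∧ y v ≤ H) (h : ℕ) (hh : H + 1 ≤ h) : HasSLDrawingOfHeight G h := by
  refine Geo.drawing (τ := τ) (y := y) (H := H) (X := fun k => (H + 1) ^ k) ⟨hok, hy, ?_, ?_⟩ h hh
  · exact pow_right_strictMono₀ (by omega)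
  · intro i b j hib hbj
    obtain ⟨d, rfl⟩ := Nat.exists_eq_add_of_lt hbj
    have h1 : (H + 1) ^ b ≤ (H + 1) ^ (b + d) := pow_le_pow_right₀ (by omega) (by omega)
    have h2 : 0 < (H + 1) ^ i := by positivity
    have h3 : 0 < (H + 1) ^ b := by positivity
    rw [pow_succ]
    nlinarith

end Geo

section Circle

variable {V : Type} {G : SimpleGraph V}

/-- Twice the signed area of a triangle. -/
def tri (p q r : Pt) : ℝ := (q.1 - p.1) * (r.2 - p.2) - (q.2 - p.2) * (r.1 - p.1)

theorem tri_circle (a u v : ℝ) :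
    tri (Real.cos a, Real.sin a) (Real.cos (a + 2 * u), Real.sin (a + 2 * u))
      (Real.cos (a + 2 * u + 2 * v), Real.sin (a + 2 * u + 2 * v)) =
      4 * Real.sin u * Real.sin v * Real.sin (u + v) := by
  have h1 := Real.sin_sq_add_cos_sq a
  have h2 := Real.sin_sq_add_cos_sq u
  have h3 := Real.sin_sq_add_cos_sq v
  have key : ∀ x y z : ℝ, tri (Real.cos x, Real.sin x) (Real.cos y, Real.sin y)
      (Real.cos z, Real.sin z) = Real.sin (y - x) + Real.sin (z - y) - Real.sin (z - x) := by
    intro x y z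
    simp only [tri, Real.sin_sub]
    ring
  rw [key]
  have e1 : a + 2 * u - a = 2 * u := by ring
  have e2 : a + 2 * u + 2 * v - (a + 2 * u) = 2 * v := by ring
  have e3 : a + 2 * u + 2 * v - a = 2 * u + 2 * v := by ring
  rw [e1, e2, e3, Real.sin_add (2 * u), Real.sin_add u, Real.cos_two_mul u, Real.cos_two_mul v,
    Real.sin_two_mul, Real.sin_two_mul]
  have h2' : Real.cos u ^ 2 = 1 - Real.sin u ^ 2 := by linarith
  have h3' : Real.cos v ^ 2 = 1 - Real.sin v ^ 2 := by linarith
  rw [h2', h3']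
  ring

theorem tri_pos {a b c : ℝ} (ha : -Real.pi < a) (hab : a < b) (hbc : b < c) (hc : c ≤ Real.pi) :
    0 < tri (Real.cos a, Real.sin a) (Real.cos b, Real.sin b) (Real.cos c, Real.sin c) := by
  have h := tri_circle a ((b - a) / 2) ((c - b) / 2)
  have e1 : a + 2 * ((b - a) / 2) = b := by ring
  rw [e1] at h
  have e2 : b + 2 * ((c - b) / 2) = c := by ring
  rw [e2] at h
  rw [h]
  have h1 := Real.sin_pos_of_pos_of_lt_pi (x := (b - a) / 2) (by linarith) (by linarith)
  have h2 := Real.sin_pos_of_pos_of_lt_pi (x := (c - b) / 2) (by linarith) (by linarith)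
  have h3 := Real.sin_pos_of_pos_of_lt_pi (x := (b - a) / 2 + (c - b) / 2)
    (by linarith) (by linarith)
  positivity

theorem chords_meet {a b c d : Pt} (h1 : 0 < tri a b c) (h2 : 0 < tri a c d) (h3 : 0 < tri b c d)
    (h4 : 0 < tri a b d) : ∃ z, z ∈ segment ℝ a c ∧ z ∈ segment ℝ b d := by
  have hs : tri a b c + tri a c d = tri b c d + tri a b d := by simp only [tri]; ring
  have hp : 0 < tri a b c + tri a c d := by positivity
  refine ⟨(a.1 + tri a b d / (tri a b c + tri a c d) * (c.1 - a.1),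
    a.2 + tri a b d / (tri a b c + tri a c d) * (c.2 - a.2)), ?_, ?_⟩
  · exact seg_of_coords (θ := tri a b d / (tri a b c + tri a c d)) (by positivity)
      ((div_le_one hp).2 (by linarith)) rfl rfl
  · refine seg_of_coords (θ := tri a b c / (tri a b c + tri a c d)) (by positivity)
      ((div_le_one hp).2 (by linarith)) ?_ ?_
    · field_simp
      simp only [tri]; ring
    · field_simp
      simp only [tri]; ring

/-- An outerplanar graph has a linear order of its vertices without crossing edges. -/
theorem order_of_outerplanar [Fintype V] (hG : IsOuterplanar G) :
    ∃ r : V → ℕ, Function.Injective r ∧ (∀ v, r v < Fintype.card V) ∧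
      (∀ k, k < Fintype.card V → ∃ v, r v = k) ∧
      ∀ a b c d, r a < r b → r b < r c → r c < r d → G.Adj a c → G.Adj b d → False := by
  obtain ⟨pos, hinj, hcirc, hcr⟩ := hG
  let θ : V → ℝ := fun v => Complex.arg ⟨(pos v).1, (pos v).2⟩
  have hθ : ∀ v, pos v = (Real.cos (θ v), Real.sin (θ v)) := by
    intro v
    have hn : ‖(⟨(pos v).1, (pos v).2⟩ : ℂ)‖ = 1 := by
      have h := hcirc v
      have h2 : ‖(⟨(pos v).1, (pos v).2⟩ : ℂ)‖ ^ 2 = 1 := by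
        rw [Complex.sq_norm, Complex.normSq_mk]; linarith
      nlinarith [norm_nonneg (⟨(pos v).1, (pos v).2⟩ : ℂ)]
    have hc := Complex.norm_mul_cos_arg (⟨(pos v).1, (pos v).2⟩ : ℂ)
    have hs := Complex.norm_mul_sin_arg (⟨(pos v).1, (pos v).2⟩ : ℂ)
    rw [hn, one_mul] at hc hs
    ext
    · exact hc.symm
    · exact hs.symm
  have hθinj : Function.Injective θ := by
    intro u v h
    apply hinj
    rw [hθ u, hθ v, h]
  letI : LinearOrder V := LinearOrder.lift' θ hθinj
  have hlt : ∀ u v : V, u < v → θ u < θ v := fun u v h => h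
  let f := Fintype.orderIsoFinOfCardEq V rfl
  have hr : ∀ u v : V, (f.symm u).val < (f.symm v).val → θ u < θ v := by
    intro u v h
    apply hlt
    exact f.symm.lt_iff_lt.1 h
  refine ⟨fun v => (f.symm v).val, ?_, fun v => (f.symm v).isLt, ?_, ?_⟩
  · intro u v h
    exact f.symm.injective (Fin.ext h)
  · intro k hk
    exact ⟨f ⟨k, hk⟩, by simp⟩
  · intro a b c d hab hbc hcd e1 e2
    have ne : ∀ u v : V, (f.symm u).val < (f.symm v).val → u ≠ v := by
      rintro u v h rfl; exact lt_irrefl _ h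
    have nab := ne _ _ hab
    have nbc := ne _ _ hbc
    have ncd := ne _ _ hcd
    have nad := ne a d (hab.trans (hbc.trans hcd))
    have tab := hr _ _ hab
    have tbc := hr _ _ hbc
    have tcd := hr _ _ hcd
    have ta : -Real.pi < θ a := Complex.neg_pi_lt_arg _
    have td : θ d ≤ Real.pi := Complex.arg_le_pi _
    obtain ⟨z, hz1, hz2⟩ := chords_meet (a := pos a) (b := pos b) (c := pos c) (d := pos d)
      (by rw [hθ a, hθ b, hθ c]; exact tri_pos ta tab tbc (by linarith))
      (by rw [hθ a, hθ c, hθ d]; exact tri_pos ta (by linarith) tcd td)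
      (by rw [hθ b, hθ c, hθ d]; exact tri_pos (by linarith) tbc tcd td)
      (by rw [hθ a, hθ b, hθ d]; exact tri_pos ta tab (by linarith) td)
    have hs : s(a, c) ≠ s(b, d) := by
      intro h
      rcases Sym2.eq_iff.1 h with ⟨h1, _⟩ | ⟨h1, _⟩
      · exact nab h1
      · exact nad h1
    obtain ⟨w, ⟨hw1, hw2⟩, _⟩ := hcr a c b d e1 e2 hs ⟨hz1, hz2⟩
    rcases hw1 with h1 | h1 <;> rcases hw2 with h2 | h2
    · exact nab (h1.symm.trans h2)
    · exact nad (h1.symm.trans h2)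
    · exact nbc (h2.symm.trans h1)
    · exact ncd (h1.symm.trans h2)

/-- The recursive decomposition of an outerplanar graph. -/
theorem out_of_order {r : V → ℕ} {n : ℕ} (hinj : Function.Injective r)
    (hlt : ∀ v, r v < n) (hsur : ∀ k, k < n → ∃ v, r v = k)
    (hcr : ∀ a b c d, r a < r b → r b < r c → r c < r d → G.Adj a c → G.Adj b d → False)
    (m : ℕ) : ∀ s t : V, r t = r s + m → 1 ≤ m → Out G {v | r s ≤ r v ∧ r v ≤ r t} s t m := by
  induction m using Nat.strong_induction_on with
  | _ m ih =>
    intro s t hst hm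
    have hne : s ≠ t := by rintro rfl; omega
    rcases hm.eq_or_lt with rfl | hm1
    · have : {v | r s ≤ r v ∧ r v ≤ r t} = ({s, t} : Set V) := by
        ext v
        constructor
        · rintro ⟨h1, h2⟩
          have h3 : r v = r s ∨ r v = r t := by omega
          exact h3.imp (fun h => hinj h) (fun h => hinj h)
        · rintro (rfl | rfl)
          · exact ⟨le_refl _, by omega⟩
          · exact ⟨by omega, le_refl _⟩
      rw [this]
      exact Out.base s t hne
    · have hx : ∃ x, r s < r x ∧ r x < r t ∧ (∀ w, G.Adj s w → r w < r t → r w ≤ r x) ∧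
          (G.Adj s x ∨ r x = r s + 1) := by
        classical
        let P : ℕ → Prop := fun k => ∃ x, r x = k ∧ r s < r x ∧ r x < r t ∧
          (G.Adj s x ∨ r x = r s + 1)
        have hP : P (r s + 1) := by
          obtain ⟨x, hx⟩ := hsur (r s + 1) (by have := hlt t; omega)
          exact ⟨x, hx, by omega, by omega, Or.inr hx⟩
        have hmax := Nat.findGreatest_spec (P := P) (m := r s + 1) (n := r t) (by omega) hP
        obtain ⟨x, h1, h2, h3, h4⟩ := hmax
        refine ⟨x, h2, h3, ?_, h4⟩
        intro w hw hwt
        by_cases hsw : r s < r w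
        · rw [h1]
          exact Nat.le_findGreatest hwt.le ⟨w, rfl, hsw, hwt, Or.inl hw⟩
        · omega
      obtain ⟨x, h1, h2, h3, h4⟩ := hx
      have hA := ih (r x - r s) (by omega) s x (by omega) (by omega)
      have hB := ih (r t - r x) (by omega) x t (by omega) (by omega)
      have hAB : {v | r s ≤ r v ∧ r v ≤ r x} ∩ {v | r x ≤ r v ∧ r v ≤ r t} = ({x} : Set V) := by
        ext v
        constructor
        · rintro ⟨⟨_, g2⟩, ⟨g3, _⟩⟩
          exact hinj (le_antisymm g2 g3)
        · rintro rfl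
          exact ⟨⟨h1.le, le_refl _⟩, ⟨le_refl _, h2.le⟩⟩
      have hU : {v | r s ≤ r v ∧ r v ≤ r t} =
          {v | r s ≤ r v ∧ r v ≤ r x} ∪ {v | r x ≤ r v ∧ r v ≤ r t} := by
        ext v
        simp only [mem_setOf_eq, mem_union]
        omega
      have hmm : m = (r x - r s) + (r t - r x) := by omega
      rw [hU, hmm]
      refine Out.node hA hB hAB ?_
      rintro u ⟨u1, u2⟩ v ⟨v1, v2⟩ e
      by_cases hux : r x ≤ r u
      · exact Or.inl ⟨hux, by omega⟩
      by_cases hvx : r v ≤ r x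
      · exact Or.inr (Or.inl ⟨by omega, hvx⟩)
      right; right
      by_cases hus : r u = r s
      · have : u = s := hinj hus
        subst this
        refine ⟨rfl, ?_⟩
        by_contra hvt
        have h5 : r v < r t := lt_of_le_of_ne v2 fun h => hvt (hinj h)
        have := h3 v e h5
        omega
      · exfalso
        rcases h4 with h4 | h4
        · exact hcr s u x v (by omega) (by omega) (by omega) h4 e
        · omega

end Circle

/-- There is a constant `c` such that every finite simple
outerplanar graph with `n ≥ 2` vertices has a planar straight-line drawing of height
at most `c · log n`. -/
theorem outerplanar_straightLine_height_log :
    ∃ c : ℝ, ∀ (V : Type) [Fintype V], ∀ G : SimpleGraph V,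
      IsOuterplanar G → 2 ≤ Fintype.card V →
      ∃ h : ℕ, (h : ℝ) ≤ c * Real.log (Fintype.card V) ∧ HasSLDrawingOfHeight G h := by
  refine ⟨20, ?_⟩
  intro V _ G hG hn
  obtain ⟨r, hinj, hlt, hsur, hcr⟩ := order_of_outerplanar hG
  set n := Fintype.card V with hndef
  obtain ⟨s, hs⟩ := hsur 0 (by omega)
  obtain ⟨t, ht⟩ := hsur (n - 1) (by omega)
  have hout := out_of_order hinj hlt hsur hcr (n - 1) s t (by omega) (by omega)
  have hU : {v | r s ≤ r v ∧ r v ≤ r t} = (univ : Set V) := by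
    ext v
    have := hlt v
    simp only [mem_setOf_eq, mem_univ, iff_true]
    omega
  rw [hU] at hout
  set k := Nat.log 2 n with hk
  have hk1 : n < 2 ^ (k + 1) := Nat.lt_pow_succ_log_self (by norm_num) n
  have hk2 : 2 ^ k ≤ n := Nat.pow_log_le_self 2 (by omega)
  have hk3 : 1 ≤ k := by
    rw [hk]; exact Nat.log_pos (by norm_num) hn
  obtain ⟨⟨τ, y, hok, -, -, hys, hyt, hyr⟩, -, -⟩ :=
    allD G (k + 1) univ s t (n - 1) hout (by omega) (3 * (k + 1) : ℤ) (by push_cast; omega)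
  refine ⟨3 * (k + 1) + 1, ?_, ?_⟩
  · have hlog : (k : ℝ) * Real.log 2 ≤ Real.log n := by
      rw [← Real.log_pow]
      apply Real.log_le_log (by positivity)
      exact_mod_cast hk2
    have h2 := Real.log_two_gt_d9
    have hkR : (1 : ℝ) ≤ k := by exact_mod_cast hk3
    push_cast
    nlinarith
  · refine drawing_of_ok (H := (3 * (k + 1) : ℤ)) (by omega) hok ?_ _ (by push_cast; omega)
    intro v
    by_cases hvs : v = s
    · subst hvs; omega
    by_cases hvt : v = t
    · subst hvt; omega
    have := hyr v trivial hvs hvt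
    omega
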